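/- arXiv:0901.2061 — 3 statements merged into one kernel-verified Lean document; each statement's English description precedes it below -/
import Mathlib

section
/- Let r ≥ 2 and let 𝓗 = {H_1, …, H_ℓ} be a finite family of nontrivial balanced r-graphs, where H_i has v_i vertices, e_i edges and ρ_i = ρ(H_i) = (e_i − 1)/(v_i − r), with ρ_1 ≤ ρ_2 ≤ … ≤ ρ_ℓ. Let s be defined by ρ := ρ_1 = ρ_2 = … = ρ_s < ρ_{s+1}, and assume ρ > 1/(r−1). For each i and each edge e of H_i let α_i(e) be the number of automorphisms of H_i mapping e to itself, and set α_i = min_e α_i(e). Let c_1 > 0 be the solution of Σ_{i=1}^{s} e_i x^{e_i−1}/α_i = 1/(50·r!), let c_2 = max{ (α_i/(5 e_i c_1^{e_i−1} r!))^{1/(r−1)} : 1 ≤ i ≤ s }, and let c_𝓗 = 2 (r!/c_1)^{1/(r−1−1/ρ)} · c_2^{(r−1)(r−1/ρ)/(r−1−1/ρ)} · ((r−1)/(r−1−1/ρ))^{(r−1/ρ)/(r−1−1/ρ)}. Then for all sufficiently large k there exists an 𝓗-free r-graph with chromatic number greater than k and fewer than c_𝓗 · (k^{r−1} log k)^{(r−1/ρ)/(r−1−1/ρ)}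 edges; that is, m_k(𝓗) < c_𝓗 (k^{r−1} log k)^{(r−1/ρ)/(r−1−1/ρ)}. -/
/-- `E` is the edge set of an `r`-uniform hypergraph: every edge has exactly `r` vertices. -/
def IsRGraph (r : ℕ) {V : Type*} (E : Finset (Finset V)) : Prop :=
  ∀ e ∈ E, e.card = r

/-- `f` is a proper coloring of the hypergraph with edge set `E`:
no edge with at least two vertices is monochromatic. -/
def IsProperColoring {V : Type*} (E : Finset (Finset V)) {k : ℕ} (f : V → Fin k) : Prop :=
  ∀ e ∈ E, 2 ≤ e.card → ∃ u ∈ e, ∃ v ∈ e, f u ≠ f v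

/-- The hypergraph with edge set `E` is properly `k`-colorable,
i.e. its chromatic number is at most `k`. -/
def HypColorable {V : Type*} (E : Finset (Finset V)) (k : ℕ) : Prop :=
  ∃ f : V → Fin k, IsProperColoring E f

/-- `EG` contains a (not necessarily induced) copy of the hypergraph `EH`. -/
def HasCopy {W V : Type*} [DecidableEq V]
    (EH : Finset (Finset W)) (EG : Finset (Finset V)) : Prop :=
  ∃ g : W → V, Function.Injective g ∧ ∀ e ∈ EH, e.image g ∈ EG

/-- The number of automorphisms of the hypergraph `H` (on vertex set `Fin m`) that map the
edge `ed` to itself. -/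
noncomputable def autFixCount {m : ℕ} (H : Finset (Finset (Fin m))) (ed : Finset (Fin m)) : ℕ :=
  Nat.card {σ : Equiv.Perm (Fin m) // (∀ f ∈ H, f.image σ ∈ H) ∧ ed.image σ = ed}

/-!
Let `θ = 1 / ρ` and take a random `r`-graph on `n ≈ (K k ^ (r - 1) log k) ^ (1 / (r - 1 - θ))`
vertices with edge probability `p = c₁ n ^ (-θ)`. Deleting the union of a maximal family of
edge-disjoint forbidden copies leaves an `𝓗`-free hypergraph, so it suffices that every set `T` of
`t ≈ n / k` vertices retains an edge: each color class of a `k`-coloring then has fewer than `t`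
vertices, which is too few to cover all `n`.

The number of edges inside `T` is binomial and exceeds `p (t choose r) / 4` outside an event of
probability `exp (-p (t choose r) / 5)`. The number of deleted edges inside `T` is controlled by an
exponential moment: the edges that a packing `D` of copies has inside `T` contribute
`∏ S ∈ D, exp |S ∩ T|`, and edge-disjointness makes the presence of the members of `D` independent,
so the sum over all packings has expectation at most `∏ S, (1 + (exp |S ∩ T| - 1) p ^ |S|)`, over
all copies `S`. Only the copies of the hypergraphs of density exactly `ρ` that have a single edge in
`T` matter asymptotically, and the choice of `c₁` bounds their contribution. Finally
`K = 10 (r! / c₁) ((r - 1) / (r - 1 - θ))` makes `p (t choose r) ~ 10 t log n`, which beats the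
union bound over all `T`.
-/

section RandomSubset

open Finset

variable {β R : Type*} [DecidableEq β] [CommRing R]

/-- The expectation of `f G` for the random subset `G` of `E` that contains each element of `E`
independently with probability `p`. -/
def bernoulliMean (p : R) (E : Finset β) (f : Finset β → R) : R :=
  ∑ G ∈ E.powerset, p ^ #G * (1 - p) ^ #(E \ G) * f G

variable {p : R} {E : Finset β}

lemma bernoulliMean_congr {f g : Finset β → R} (h : ∀ G ⊆ E, f G = g G) :
    bernoulliMean p E f = bernoulliMean p E g :=
  sum_congr rfl fun G hG => by rw [h G (mem_powerset.1 hG)]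

lemma bernoulliMean_add (f g : Finset β → R) :
    bernoulliMean p E (fun G => f G + g G) = bernoulliMean p E f + bernoulliMean p E g := by
  simp only [bernoulliMean, mul_add, sum_add_distrib]

lemma bernoulliMean_const_mul (c : R) (f : Finset β → R) :
    bernoulliMean p E (fun G => c * f G) = c * bernoulliMean p E f := by
  simp only [bernoulliMean, mul_left_comm _ c, ← mul_sum]

lemma bernoulliMean_sum {ι : Type*} (s : Finset ι) (f : ι → Finset β → R) :
    bernoulliMean p E (fun G => ∑ i ∈ s, f i G) = ∑ i ∈ s, bernoulliMean p E (f i) := by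
  simp only [bernoulliMean, mul_sum]
  exact sum_comm

lemma bernoulliMean_prod_mul_prod_sdiff (x y : β → R) :
    bernoulliMean p E (fun G => (∏ i ∈ G, x i) * ∏ i ∈ E \ G, y i) =
      ∏ i ∈ E, (p * x i + (1 - p) * y i) := by
  simp only [bernoulliMean, prod_add, prod_mul_distrib, prod_const, mul_mul_mul_comm]

lemma bernoulliMean_const (c : R) : bernoulliMean p E (fun _ => c) = c := by
  have hone := bernoulliMean_prod_mul_prod_sdiff (p := p) (E := E) (fun _ => 1) fun _ => 1
  simp only [prod_const_one, mul_one, add_sub_cancel] at hone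
  simpa [hone] using bernoulliMean_const_mul (p := p) (E := E) c fun _ => 1

lemma bernoulliMean_superset {S : Finset β} (hS : S ⊆ E) :
    bernoulliMean p E (fun G => if S ⊆ G then 1 else 0) = p ^ #S := by
  calc bernoulliMean p E (fun G => if S ⊆ G then 1 else 0)
      = bernoulliMean p E (fun G => (∏ _i ∈ G, 1) * ∏ i ∈ E \ G, if i ∉ S then 1 else 0) := by
        refine bernoulliMean_congr fun G _ => ?_
        have hiff : S ⊆ G ↔ ∀ i ∈ E \ G, i ∉ S :=
          ⟨fun h i hi hiS => (mem_sdiff.1 hi).2 (h hiS),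
            fun h i hiS => by_contra fun hiG => h i (mem_sdiff.2 ⟨hS hiS, hiG⟩) hiS⟩
        simp only [prod_const_one, prod_ite_zero, one_mul, hiff]
    _ = ∏ i ∈ E, if i ∈ S then p else 1 := by
        rw [bernoulliMean_prod_mul_prod_sdiff]
        exact prod_congr rfl fun i _ => by by_cases hi : i ∈ S <;> simp [hi]
    _ = p ^ #S := by
        rw [prod_ite_mem, inter_eq_right.2 hS, prod_const]

lemma bernoulliMean_card : bernoulliMean p E (fun G => (#G : R)) = p * #E := by
  calc bernoulliMean p E (fun G => (#G : R))
      = bernoulliMean p E (fun G => ∑ i ∈ E, if {i} ⊆ G then 1 else 0) := by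
        refine bernoulliMean_congr fun G hG => ?_
        simp only [singleton_subset_iff, sum_boole, filter_mem_eq_inter, inter_eq_right.2 hG]
    _ = ∑ _i ∈ E, p := by
        rw [bernoulliMean_sum]
        refine sum_congr rfl fun i hi => ?_
        rw [bernoulliMean_superset (singleton_subset_iff.2 hi), card_singleton, pow_one]
    _ = p * #E := by rw [sum_const, nsmul_eq_mul, mul_comm]

lemma bernoulliMean_pow_card_inter {U : Finset β} (hU : U ⊆ E) (x : R) :
    bernoulliMean p E (fun G => x ^ #(G ∩ U)) = (1 - p * (1 - x)) ^ #U := by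
  calc bernoulliMean p E (fun G => x ^ #(G ∩ U))
      = bernoulliMean p E
          (fun G => (∏ i ∈ G, if i ∈ U then x else 1) * ∏ _i ∈ E \ G, 1) := by
        simp only [prod_ite_mem, prod_const, one_pow, mul_one]
    _ = ∏ i ∈ E, if i ∈ U then 1 - p * (1 - x) else 1 := by
        rw [bernoulliMean_prod_mul_prod_sdiff]
        refine prod_congr rfl fun i _ => ?_
        split_ifs <;> ring
    _ = (1 - p * (1 - x)) ^ #U := by
        rw [prod_ite_mem, inter_eq_right.2 hU, prod_const]

lemma exists_subset_lt_of_bernoulliMean_lt [LinearOrder R] [IsStrictOrderedRing R] (hp0 : 0 ≤ p)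
    (hp1 : p ≤ 1) {f : Finset β → R} {c : R} (h : bernoulliMean p E f < c) :
    ∃ G ⊆ E, f G < c := by
  by_contra! hf
  refine h.not_ge ?_
  rw [← bernoulliMean_const (p := p) (E := E) c]
  refine sum_le_sum fun G hG => ?_
  exact mul_le_mul_of_nonneg_left (hf G (mem_powerset.1 hG))
    (mul_nonneg (pow_nonneg hp0 _) (pow_nonneg (sub_nonneg.2 hp1) _))

end RandomSubset

section Packing

open Finset

variable {β R : Type*} [DecidableEq β]

open Classical in
/-- The packings of members of `B` in `G`: the pairwise disjoint subfamilies of `B` all of whose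
members are subsets of `G`. -/
noncomputable def packings (B : Finset (Finset β)) (G : Finset β) : Finset (Finset (Finset β)) :=
  B.powerset.filter fun D => (D : Set (Finset β)).PairwiseDisjoint id ∧ ∀ S ∈ D, S ⊆ G

variable {B D : Finset (Finset β)} {E G U : Finset β}

lemma mem_packings :
    D ∈ packings B G ↔ D ⊆ B ∧ (D : Set (Finset β)).PairwiseDisjoint id ∧ ∀ S ∈ D, S ⊆ G := by
  simp only [packings, mem_filter, mem_powerset]

lemma packings_eq_filter (B : Finset (Finset β)) (hG : G ⊆ E) :
    packings B G = {D ∈ packings B E | D.biUnion id ⊆ G} := by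
  ext D
  simp only [mem_filter, mem_packings, biUnion_subset, id]
  exact ⟨fun ⟨hB, hd, hDG⟩ => ⟨⟨hB, hd, fun S hS => (hDG S hS).trans hG⟩, hDG⟩,
    fun ⟨⟨hB, hd, _⟩, hDG⟩ => ⟨hB, hd, hDG⟩⟩

lemma card_biUnion_inter_of_mem_packings (hD : D ∈ packings B G) (U : Finset β) :
    #(D.biUnion id ∩ U) = ∑ S ∈ D, #(S ∩ U) := by
  rw [biUnion_inter]
  exact card_biUnion fun S hS T hT hST =>
    ((mem_packings.1 hD).2.1 hS hT hST).mono inter_subset_left inter_subset_left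

lemma exists_mem_packings_forall_not_subset_sdiff (hB : ∀ S ∈ B, S.Nonempty) (G : Finset β) :
    ∃ D ∈ packings B G, ∀ S ∈ B, ¬ S ⊆ G \ D.biUnion id := by
  obtain ⟨D, hD, hmax⟩ := exists_max_image (packings B G) card ⟨∅, by simp [mem_packings]⟩
  refine ⟨D, hD, fun S hS hSG => ?_⟩
  obtain ⟨hDB, hDdisj, hDG⟩ := mem_packings.1 hD
  obtain ⟨hSG, hSD⟩ := subset_sdiff.1 hSG
  have hdisj : ∀ T ∈ D, Disjoint S T := (disjoint_biUnion_right _ _ _).1 hSD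
  have hnotMem : S ∉ D := fun h => (hB S hS).ne_empty (disjoint_self.1 (hdisj S h))
  have hinsert : insert S D ∈ packings B G := by
    refine mem_packings.2 ⟨insert_subset hS hDB, ?_, forall_mem_insert _ _ _ |>.2 ⟨hSG, hDG⟩⟩
    rw [coe_insert]
    exact hDdisj.insert fun T hT _ => hdisj T hT
  have := hmax _ hinsert
  rw [card_insert_of_notMem hnotMem] at this
  omega

/-- The sum over the packings `D` of members of `B` in `G` of the weight `∏ S ∈ D, z S`. -/
noncomputable def packingSum [CommSemiring R] (B : Finset (Finset β)) (z : Finset β → R)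
    (G : Finset β) : R :=
  ∑ D ∈ packings B G, ∏ S ∈ D, z S

-- The members of a packing are disjoint, hence present independently of each other.
lemma bernoulliMean_packingSum [CommRing R] (p : R) (B : Finset (Finset β)) (z : Finset β → R)
    (E : Finset β) :
    bernoulliMean p E (packingSum B z) = packingSum B (fun S => z S * p ^ #S) E := by
  calc bernoulliMean p E (packingSum B z)
      = bernoulliMean p E (fun G => ∑ D ∈ packings B E,
          (∏ S ∈ D, z S) * if D.biUnion id ⊆ G then 1 else 0) :=
        bernoulliMean_congr fun G hG => by
          simp only [packingSum, packings_eq_filter B hG, sum_filter, mul_ite, mul_one, mul_zero]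
    _ = ∑ D ∈ packings B E, (∏ S ∈ D, z S) * p ^ #(D.biUnion id) := by
        rw [bernoulliMean_sum]
        refine sum_congr rfl fun D hD => ?_
        rw [bernoulliMean_const_mul,
          bernoulliMean_superset (biUnion_subset (t := id) |>.2 (mem_packings.1 hD).2.2)]
    _ = packingSum B (fun S => z S * p ^ #S) E := by
        refine sum_congr rfl fun D hD => ?_
        rw [card_biUnion fun S hS T hT hST => (mem_packings.1 hD).2.1 hS hT hST,
          prod_mul_distrib, prod_pow_eq_pow_sum]
        rfl

section Order

variable [CommSemiring R] [PartialOrder R] [IsOrderedRing R] {z : Finset β → R}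

lemma packingSum_nonneg (hz : ∀ S, 0 ≤ z S) : 0 ≤ packingSum B z G :=
  sum_nonneg fun _ _ => prod_nonneg fun S _ => hz S

lemma packingSum_le_prod_one_add (hz : ∀ S, 0 ≤ z S) :
    packingSum B z G ≤ ∏ S ∈ B, (1 + z S) := by
  rw [prod_one_add]
  exact sum_le_sum_of_subset_of_nonneg (fun D hD => mem_powerset.2 (mem_packings.1 hD).1)
    fun _ _ _ => prod_nonneg fun S _ => hz S

lemma prod_one_add_le_packingSum (hz : ∀ S, 0 ≤ z S) (hD : D ∈ packings B G) :
    ∏ S ∈ D, (1 + z S) ≤ packingSum B z G := by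
  obtain ⟨hDB, hDdisj, hDG⟩ := mem_packings.1 hD
  rw [prod_one_add]
  refine sum_le_sum_of_subset_of_nonneg (fun A hA => ?_) fun _ _ _ => prod_nonneg fun S _ => hz S
  have hAD := mem_powerset.1 hA
  exact mem_packings.2 ⟨hAD.trans hDB, hDdisj.subset (coe_subset.2 hAD), fun S hS => hDG S (hAD hS)⟩

end Order

end Packing

section Deletion

open Finset Real

variable {β : Type*} [DecidableEq β] {B D : Finset (Finset β)} {E G U : Finset β}

/-- The weight `exp |S ∩ U| - 1`, under which `packingSum` dominates the exponential of the number
of elements of `U` covered by a packing. -/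
noncomputable def overlapWeight (U S : Finset β) : ℝ :=
  exp #(S ∩ U) - 1

lemma overlapWeight_nonneg (U S : Finset β) : 0 ≤ overlapWeight U S :=
  sub_nonneg.2 (one_le_exp (Nat.cast_nonneg _))

lemma exp_card_biUnion_inter_le_packingSum (hD : D ∈ packings B G) (U : Finset β) :
    exp #(D.biUnion id ∩ U) ≤ packingSum B (overlapWeight U) G := by
  calc exp #(D.biUnion id ∩ U) = ∏ S ∈ D, (1 + overlapWeight U S) := by
        simp only [card_biUnion_inter_of_mem_packings hD, Nat.cast_sum, exp_sum, overlapWeight,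
          add_sub_cancel]
    _ ≤ packingSum B (overlapWeight U) G :=
        prod_one_add_le_packingSum (overlapWeight_nonneg U) hD

lemma sdiff_biUnion_inter_nonempty (hD : D ∈ packings B G) {a : ℝ} (ha : a < #(G ∩ U))
    (hpack : packingSum B (overlapWeight U) G < exp a) :
    ((G \ D.biUnion id) ∩ U).Nonempty := by
  have hcovered : (#(D.biUnion id ∩ U) : ℝ) < a :=
    exp_lt_exp.1 ((exp_card_biUnion_inter_le_packingSum hD U).trans_lt hpack)
  rw [sdiff_inter_right_comm, sdiff_nonempty]
  intro hsub
  have : #(G ∩ U) ≤ #(D.biUnion id ∩ U) :=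
    card_le_card (subset_inter hsub inter_subset_right)
  exact (hcovered.trans ha).not_ge (by exact_mod_cast this)

/-- A bound on the expected number of failures of the random subset of `E` at the target `U`: either
the subset has at most `a` elements in `U`, or some packing of members of `B` covers at least `a`
elements of `U`. -/
noncomputable def failureBound (p a : ℝ) (B : Finset (Finset β)) (U : Finset β) : ℝ :=
  exp a * (1 - p * (1 - exp (-1))) ^ #U +
    exp (-a) * ∏ S ∈ B, (1 + overlapWeight U S * p ^ #S)

/-- The random variable whose value below `1` witnesses that `U` is met by `G` in more than `a`
elements, and that no packing covers as many of them. -/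
noncomputable def failureWeight (a : ℝ) (B : Finset (Finset β)) (U G : Finset β) : ℝ :=
  exp a * exp (-1) ^ #(G ∩ U) + exp (-a) * packingSum B (overlapWeight U) G

lemma failureWeight_nonneg (a : ℝ) (B : Finset (Finset β)) (U G : Finset β) :
    0 ≤ failureWeight a B U G := by
  have := packingSum_nonneg (B := B) (G := G) (overlapWeight_nonneg U)
  rw [failureWeight]
  positivity

lemma lt_card_inter_of_failureWeight_lt_one {a : ℝ} (h : failureWeight a B U G < 1) :
    a < #(G ∩ U) := by
  have hpack : 0 ≤ exp (-a) * packingSum B (overlapWeight U) G :=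
    mul_nonneg (exp_pos _).le (packingSum_nonneg (overlapWeight_nonneg U))
  have : exp (a + #(G ∩ U) * -1) < 1 := by
    rw [exp_add, exp_nat_mul]
    exact (le_add_of_nonneg_right hpack).trans_lt h
  linarith [exp_lt_one_iff.1 this]

lemma packingSum_lt_exp_of_failureWeight_lt_one {a : ℝ} (h : failureWeight a B U G < 1) :
    packingSum B (overlapWeight U) G < exp a := by
  have hlt : exp (-a) * packingSum B (overlapWeight U) G < 1 :=
    (le_add_of_nonneg_left (by positivity)).trans_lt h
  rwa [exp_neg, inv_mul_lt_one₀ (exp_pos _)] at hlt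

lemma bernoulliMean_failureWeight_le {p : ℝ} (hp0 : 0 ≤ p) (a : ℝ) (B : Finset (Finset β))
    (hU : U ⊆ E) :
    bernoulliMean p E (failureWeight a B U) ≤ failureBound p a B U := by
  have hmean : bernoulliMean p E (failureWeight a B U) =
      exp a * bernoulliMean p E (fun G => exp (-1) ^ #(G ∩ U)) +
        exp (-a) * bernoulliMean p E (packingSum B (overlapWeight U)) := by
    rw [← bernoulliMean_const_mul, ← bernoulliMean_const_mul, ← bernoulliMean_add]
    rfl
  rw [hmean, bernoulliMean_pow_card_inter hU, bernoulliMean_packingSum, failureBound]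
  gcongr
  exact packingSum_le_prod_one_add fun S => mul_nonneg (overlapWeight_nonneg U S) (by positivity)

-- Delete from a good random subset the union of a maximal packing of members of `B`.
theorem exists_subset_avoiding_meeting {p : ℝ} (hp0 : 0 ≤ p) (hp1 : p ≤ 1)
    {Us : Finset (Finset β)} (hB : ∀ S ∈ B, S.Nonempty) (hUs : ∀ U ∈ Us, U ⊆ E) {a M : ℝ}
    (hM : 0 < M) (hsum : ∑ U ∈ Us, failureBound p a B U + p * #E / M < 1) :
    ∃ G ⊆ E, #G < M ∧ (∀ S ∈ B, ¬ S ⊆ G) ∧ ∀ U ∈ Us, (G ∩ U).Nonempty := by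
  have hmean : bernoulliMean p E (fun G => ∑ U ∈ Us, failureWeight a B U G + M⁻¹ * #G) < 1 := by
    rw [bernoulliMean_add, bernoulliMean_sum, bernoulliMean_const_mul, bernoulliMean_card,
      inv_mul_eq_div]
    refine lt_of_le_of_lt ?_ hsum
    gcongr with U hU
    exact bernoulliMean_failureWeight_le hp0 a B (hUs U hU)
  obtain ⟨G, hGE, hG⟩ := exists_subset_lt_of_bernoulliMean_lt hp0 hp1 hmean
  have hnonneg : ∀ U ∈ Us, 0 ≤ failureWeight a B U G := fun U _ => failureWeight_nonneg a B U G
  have hcard : #G < M := by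
    have : M⁻¹ * #G < 1 := (le_add_of_nonneg_left (sum_nonneg hnonneg)).trans_lt hG
    rwa [inv_mul_lt_one₀ hM] at this
  have hfail : ∀ U ∈ Us, failureWeight a B U G < 1 := fun U hU =>
    (single_le_sum hnonneg hU).trans_lt ((le_add_of_nonneg_right (by positivity)).trans_lt hG)
  obtain ⟨D, hD, hfree⟩ := exists_mem_packings_forall_not_subset_sdiff hB G
  refine ⟨G \ D.biUnion id, sdiff_subset.trans hGE, ?_, hfree, fun U hU => ?_⟩
  · exact lt_of_le_of_lt (by exact_mod_cast card_le_card sdiff_subset) hcard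
  · exact sdiff_biUnion_inter_nonempty hD (lt_card_inter_of_failureWeight_lt_one (hfail U hU))
      (packingSum_lt_exp_of_failureWeight_lt_one (hfail U hU))

end Deletion

section Copies

open Finset Real

variable {W V : Type*} [Fintype W] [Fintype V] [DecidableEq V]

/-- The edge sets of the copies of the hypergraph `H` on the vertex set `V`. -/
noncomputable def copies (H : Finset (Finset W)) (V : Type*) [Fintype V] [DecidableEq V] :
    Finset (Finset (Finset V)) :=
  univ.image fun g : W ↪ V => H.image (·.image g)

variable {H : Finset (Finset W)} {S : Finset (Finset V)} {r : ℕ}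

lemma mem_copies : S ∈ copies H V ↔ ∃ g : W ↪ V, H.image (·.image g) = S := by
  simp [copies]

lemma hasCopy_iff_exists_mem_copies_subset {G : Finset (Finset V)} :
    HasCopy H G ↔ ∃ S ∈ copies H V, S ⊆ G := by
  constructor
  · rintro ⟨g, hg, hgG⟩
    exact ⟨_, mem_copies.2 ⟨⟨g, hg⟩, rfl⟩, image_subset_iff.2 hgG⟩
  · rintro ⟨S, hS, hSG⟩
    obtain ⟨g, rfl⟩ := mem_copies.1 hS
    exact ⟨g, g.injective, image_subset_iff.1 hSG⟩

lemma card_of_mem_copies (hS : S ∈ copies H V) : #S = #H := by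
  classical
  obtain ⟨g, rfl⟩ := mem_copies.1 hS
  exact card_image_of_injective _ (image_injective g.injective)

lemma card_embedding_image_eq_le (h : Finset W) (f : Finset V) :
    #{g : W ↪ V | h.image g = f} ≤
      (#f).descFactorial #h * Fintype.card V ^ (Fintype.card W - #h) := by
  classical
  have hcard : Fintype.card ((h ↪ f) × (↥hᶜ → V)) =
      (#f).descFactorial #h * Fintype.card V ^ (Fintype.card W - #h) := by
    simp [Fintype.card_embedding_eq]
  rw [← hcard, ← Fintype.card_subtype]
  let restrict (g : {g : W ↪ V // h.image g = f}) : (h ↪ f) × (↥hᶜ → V) :=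
    (⟨fun x => ⟨g.1 x, g.2.subset (mem_image_of_mem _ x.2)⟩,
      fun _ _ hxy => Subtype.ext (g.1.injective (congrArg Subtype.val hxy))⟩, fun x => g.1 x)
  refine Fintype.card_le_of_injective restrict fun g₁ g₂ hg => ?_
  ext x
  by_cases hx : x ∈ h
  · exact congrArg Subtype.val (DFunLike.congr_fun (congrArg Prod.fst hg) ⟨x, hx⟩)
  · exact congrFun (congrArg Prod.snd hg) ⟨x, mem_compl.2 hx⟩

lemma card_forall_mem_apply_mem [DecidableEq W] (A : Finset W) (T : Finset V) :
    #{g : W → V | ∀ x ∈ A, g x ∈ T} = #T ^ #A * Fintype.card V ^ (Fintype.card W - #A) := by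
  have hpi : ({g : W → V | ∀ x ∈ A, g x ∈ T} : Finset _) =
      Fintype.piFinset fun x => if x ∈ A then T else univ := by
    ext g
    simp only [mem_filter, mem_univ, true_and, Fintype.mem_piFinset]
    refine forall_congr' fun x => ?_
    split_ifs with hx <;> simp [hx]
  rw [hpi, Fintype.card_piFinset]
  simp only [apply_ite card, prod_ite, prod_const, filter_mem_eq_inter, univ_inter,
    filter_notMem_eq_sdiff, ← compl_eq_univ_sdiff, card_compl, card_univ]

-- Two distinct edges span at least `r + 1` vertices.
lemma card_copies_two_le_card_inter_le (hH : IsRGraph r H) (T : Finset V) :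
    #{S ∈ copies H V | 2 ≤ #(S ∩ powersetCard r T)} ≤
      #H * #H * (#T ^ (r + 1) * Fintype.card V ^ (Fintype.card W - (r + 1))) := by
  classical
  let mapsInto (q : Finset W × Finset W) : Finset (W → V) := {g | ∀ x ∈ q.1 ∪ q.2, g x ∈ T}
  have hsub : {S ∈ copies H V | 2 ≤ #(S ∩ powersetCard r T)} ⊆
      (H.offDiag.biUnion mapsInto).image fun g => H.image (·.image g) := by
    intro S hS
    obtain ⟨hS, h2⟩ := mem_filter.1 hS
    obtain ⟨g, rfl⟩ := mem_copies.1 hS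
    obtain ⟨_, hf₁, _, hf₂, hne⟩ := one_lt_card.1 h2
    obtain ⟨hf₁, hf₁T⟩ := mem_inter.1 hf₁
    obtain ⟨hf₂, hf₂T⟩ := mem_inter.1 hf₂
    obtain ⟨h₁, hh₁, rfl⟩ := mem_image.1 hf₁
    obtain ⟨h₂, hh₂, rfl⟩ := mem_image.1 hf₂
    refine mem_image_of_mem _ (mem_biUnion.2 ⟨(h₁, h₂), mem_offDiag.2 ⟨hh₁, hh₂,
      ne_of_apply_ne _ hne⟩, mem_filter.2 ⟨mem_univ _, fun x hx => ?_⟩⟩)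
    rcases mem_union.1 hx with hx | hx
    · exact (mem_powersetCard.1 hf₁T).1 (mem_image_of_mem _ hx)
    · exact (mem_powersetCard.1 hf₂T).1 (mem_image_of_mem _ hx)
  have hmaps : ∀ q ∈ H.offDiag,
      #(mapsInto q) ≤ #T ^ (r + 1) * Fintype.card V ^ (Fintype.card W - (r + 1)) := by
    rintro ⟨h₁, h₂⟩ hq
    obtain ⟨hh₁, hh₂, hne⟩ := mem_offDiag.1 hq
    obtain ⟨x, hx₂, hx₁⟩ : ∃ x ∈ h₂, x ∉ h₁ := by
      by_contra! hsub
      exact hne (eq_of_subset_of_card_le hsub (by rw [hH _ hh₁, hH _ hh₂])).symm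
    have hcard : #(insert x h₁) = r + 1 := by rw [card_insert_of_notMem hx₁, hH _ hh₁]
    rw [← hcard, ← card_forall_mem_apply_mem]
    have hinsert : insert x h₁ ⊆ h₁ ∪ h₂ := insert_subset (mem_union_right _ hx₂) subset_union_left
    exact card_le_card fun g hg =>
      mem_filter.2 ⟨mem_univ g, fun y hy => (mem_filter.1 hg).2 y (hinsert hy)⟩
  calc #{S ∈ copies H V | 2 ≤ #(S ∩ powersetCard r T)}
      ≤ #(H.offDiag.biUnion mapsInto) := (card_le_card hsub).trans card_image_le
    _ ≤ #H.offDiag * (#T ^ (r + 1) * Fintype.card V ^ (Fintype.card W - (r + 1))) :=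
        card_biUnion_le_card_mul _ _ _ hmaps
    _ ≤ #H * #H * (#T ^ (r + 1) * Fintype.card V ^ (Fintype.card W - (r + 1))) := by
        rw [offDiag_card]
        gcongr
        exact Nat.sub_le _ _

section Automorphisms

variable {m a : ℕ} {H : Finset (Finset (Fin m))}

lemma autFixCount_pos (H : Finset (Finset (Fin m))) (h : Finset (Fin m)) : 0 < autFixCount H h := by
  have : Nonempty {σ : Equiv.Perm (Fin m) // (∀ f ∈ H, f.image σ ∈ H) ∧ h.image σ = h} :=
    ⟨1, by simp⟩
  exact Nat.card_pos

-- Composing an embedding with an automorphism fixing `h` changes neither its copy of `H` nor the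
-- image of `h`.
lemma autFixCount_le_card_embedding (g : Fin m ↪ V) {h : Finset (Fin m)} :
    autFixCount H h ≤ #{g' : Fin m ↪ V |
      h.image g' = h.image g ∧ H.image (·.image g') = H.image (·.image g)} := by
  rw [autFixCount, Nat.card_eq_fintype_card, ← card_univ]
  refine card_le_card_of_injOn (fun σ => σ.1.toEmbedding.trans g) (fun σ _ => ?_)
    fun σ _ τ _ hστ => ?_
  · have himage : H.image (·.image σ.1) = H :=
      eq_of_subset_of_card_le (image_subset_iff.2 σ.2.1)
        (card_image_of_injective _ (image_injective σ.1.injective)).ge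
    simp only [coe_filter, mem_univ, true_and, Set.mem_ofPred_eq, Function.Embedding.coe_trans,
      Equiv.coe_toEmbedding, ← image_image]
    refine ⟨congrArg (image g) σ.2.2, ?_⟩
    conv_rhs => rw [← himage, image_image]
    rfl
  · exact Subtype.ext (Equiv.ext fun x => g.injective (DFunLike.congr_fun hστ x))

lemma mul_card_copies_mem_le (hH : IsRGraph r H) (ha : ∀ h ∈ H, a ≤ autFixCount H h)
    {f : Finset V} (hf : #f = r) :
    a * #{S ∈ copies H V | f ∈ S} ≤ #H * (r.factorial * Fintype.card V ^ (m - r)) := by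
  let through : Finset (Fin m ↪ V) := H.biUnion fun h => {g | h.image g = f}
  have hthrough : #through ≤ #H * (r.factorial * Fintype.card V ^ (m - r)) :=
    card_biUnion_le_card_mul _ _ _ fun h hh => by
      simpa [hH h hh, hf, Nat.descFactorial_self] using card_embedding_image_eq_le h f
  refine le_trans (mul_card_image_le_card_of_maps_to
    (f := fun g : Fin m ↪ V => H.image (·.image g)) (fun g hg => ?_) a fun S hS => ?_) hthrough
  · obtain ⟨h, hh, hg⟩ := mem_biUnion.1 hg
    exact mem_filter.2 ⟨mem_copies.2 ⟨g, rfl⟩, mem_image.2 ⟨h, hh, (mem_filter.1 hg).2⟩⟩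
  · obtain ⟨hS, hfS⟩ := mem_filter.1 hS
    obtain ⟨g, rfl⟩ := mem_copies.1 hS
    obtain ⟨h, hh, rfl⟩ := mem_image.1 hfS
    refine (ha h hh).trans ((autFixCount_le_card_embedding g).trans (card_le_card ?_))
    intro g' hg'
    obtain ⟨hedge, hcopy⟩ := (mem_filter.1 hg').2
    exact mem_filter.2 ⟨mem_biUnion.2 ⟨h, hh, mem_filter.2 ⟨mem_univ _, hedge⟩⟩, hcopy⟩

lemma sum_card_copies_inter_le (hH : IsRGraph r H) (ha0 : 0 < a)
    (ha : ∀ h ∈ H, a ≤ autFixCount H h) (T : Finset V) :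
    ∑ S ∈ copies H V, (#(S ∩ powersetCard r T) : ℝ) ≤
      (#T).choose r * (#H * (r.factorial * (Fintype.card V : ℝ) ^ (m - r)) / a) := by
  have hdeg : ∀ f ∈ powersetCard r T,
      #{S ∈ copies H V | f ∈ S} ≤ #H * (r.factorial * Fintype.card V ^ (m - r)) / a :=
    fun f hf => (Nat.le_div_iff_mul_le ha0).2 <| by
      rw [mul_comm]
      exact mul_card_copies_mem_le hH ha (mem_powersetCard.1 hf).2
  calc ∑ S ∈ copies H V, (#(S ∩ powersetCard r T) : ℝ)
      = (∑ S ∈ copies H V, #(powersetCard r T ∩ S) : ℕ) := by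
        simp only [Nat.cast_sum, inter_comm]
    _ ≤ ((#T).choose r * (#H * (r.factorial * Fintype.card V ^ (m - r)) / a) : ℕ) := by
        rw [← card_powersetCard]
        exact_mod_cast sum_card_inter_le hdeg
    _ ≤ (#T).choose r * (#H * (r.factorial * (Fintype.card V : ℝ) ^ (m - r)) / a) := by
        rw [Nat.cast_mul]
        gcongr
        exact Nat.cast_div_le.trans_eq (by push_cast; rfl)

lemma exp_sub_one_le_of_le {j N : ℕ} (hj : j ≤ N) :
    exp j - 1 ≤ (exp 1 - 1) * j + exp N * (if 2 ≤ j then 1 else 0) := by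
  have hexp : 1 ≤ exp 1 := one_le_exp zero_le_one
  obtain rfl | rfl | h2 : j = 0 ∨ j = 1 ∨ 2 ≤ j := by omega
  · simp
  · simp
  · have hmono : exp j ≤ exp N := exp_le_exp.2 (by exact_mod_cast hj)
    have hnonneg : 0 ≤ (exp 1 - 1) * (j : ℝ) := mul_nonneg (by linarith) (Nat.cast_nonneg _)
    rw [if_pos h2]
    linarith

/-- A bound on the total weight `overlapWeight U S * p ^ #S` of the copies `S` on `n` vertices of an
`r`-graph with `m` vertices and `e` edges, where `U` consists of the `r`-subsets of a set of `t`
vertices and `a` is a lower bound for `autFixCount`. The first summand accounts for the copies with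
one edge in `U`, the second one for those with at least two. -/
noncomputable def copyWeightBound (p : ℝ) (r n t m e a : ℕ) : ℝ :=
  p ^ e * ((exp 1 - 1) * (t.choose r * (e * (r.factorial * (n : ℝ) ^ (m - r)) / a)) +
    exp e * (e * e * ((t : ℝ) ^ (r + 1) * (n : ℝ) ^ (m - (r + 1)))))

lemma sum_copies_overlapWeight_le (hH : IsRGraph r H) (ha0 : 0 < a)
    (ha : ∀ h ∈ H, a ≤ autFixCount H h) {p : ℝ} (hp : 0 ≤ p) (T : Finset V) :
    ∑ S ∈ copies H V, overlapWeight (powersetCard r T) S * p ^ #S ≤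
      copyWeightBound p r (Fintype.card V) #T m #H a := by
  have hone : 0 ≤ exp 1 - 1 := sub_nonneg.2 (one_le_exp zero_le_one)
  have htwo : (#{S ∈ copies H V | 2 ≤ #(S ∩ powersetCard r T)} : ℝ) ≤
      #H * #H * ((#T : ℝ) ^ (r + 1) * (Fintype.card V : ℝ) ^ (m - (r + 1))) := by
    have := card_copies_two_le_card_inter_le hH T
    rw [Fintype.card_fin] at this
    exact_mod_cast this
  calc ∑ S ∈ copies H V, overlapWeight (powersetCard r T) S * p ^ #S
      ≤ ∑ S ∈ copies H V, p ^ #H * ((exp 1 - 1) * #(S ∩ powersetCard r T) +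
          exp #H * (if 2 ≤ #(S ∩ powersetCard r T) then 1 else 0)) := by
        refine sum_le_sum fun S hS => ?_
        have hle : #(S ∩ powersetCard r T) ≤ #H :=
          (card_le_card inter_subset_left).trans (card_of_mem_copies hS).le
        rw [card_of_mem_copies hS, mul_comm, overlapWeight]
        exact mul_le_mul_of_nonneg_left (exp_sub_one_le_of_le hle) (by positivity)
    _ = p ^ #H * ((exp 1 - 1) * ∑ S ∈ copies H V, (#(S ∩ powersetCard r T) : ℝ) +
          exp #H * #{S ∈ copies H V | 2 ≤ #(S ∩ powersetCard r T)}) := by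
        rw [← mul_sum, sum_add_distrib, ← mul_sum, ← mul_sum, sum_boole]
    _ ≤ copyWeightBound p r (Fintype.card V) #T m #H a := by
        rw [copyWeightBound]
        gcongr
        exact sum_card_copies_inter_le hH ha0 ha T

end Automorphisms

end Copies

section FiniteDeletion

open Finset Real

lemma sum_biUnion_le_sum_sum {ι γ M : Type*} [DecidableEq γ] [AddCommMonoid M] [PartialOrder M]
    [IsOrderedAddMonoid M] (s : Finset ι) (c : ι → Finset γ) {w : γ → M} (hw : ∀ x, 0 ≤ w x) :
    ∑ x ∈ s.biUnion c, w x ≤ ∑ i ∈ s, ∑ x ∈ c i, w x := by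
  classical
  induction s using Finset.induction_on with
  | empty => simp
  | insert i s hi ih =>
    rw [biUnion_insert, sum_insert hi]
    calc ∑ x ∈ c i ∪ s.biUnion c, w x
        ≤ ∑ x ∈ c i ∪ s.biUnion c, w x + ∑ x ∈ c i ∩ s.biUnion c, w x :=
          le_add_of_nonneg_right (sum_nonneg fun x _ => hw x)
      _ = ∑ x ∈ c i, w x + ∑ x ∈ s.biUnion c, w x := sum_union_inter
      _ ≤ ∑ x ∈ c i, w x + ∑ i ∈ s, ∑ x ∈ c i, w x := by gcongr

lemma not_hypColorable_of_forall_powersetCard_inter_nonempty {V : Type*} [Fintype V]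
    [DecidableEq V] {G : Finset (Finset V)} {r t k : ℕ} (hr : 2 ≤ r)
    (hk : k * (t - 1) < Fintype.card V)
    (hG : ∀ T ∈ powersetCard t univ, (G ∩ powersetCard r T).Nonempty) : ¬ HypColorable G k := by
  rintro ⟨c, hc⟩
  obtain ⟨y, hy⟩ := Fintype.exists_lt_card_fiber_of_mul_lt_card (f := c) (n := t - 1)
    (by simpa using hk)
  obtain ⟨T, hTy, hT⟩ := exists_subset_card_eq (show t ≤ #{x | c x = y} by omega)
  obtain ⟨f, hf⟩ := hG T (mem_powersetCard.2 ⟨subset_univ T, hT⟩)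
  obtain ⟨hfG, hfT⟩ := mem_inter.1 hf
  obtain ⟨hfT, hfr⟩ := mem_powersetCard.1 hfT
  have hmono : ∀ x ∈ f, c x = y := fun x hx => (mem_filter.1 (hTy (hfT hx))).2
  obtain ⟨u, hu, w, hw, huw⟩ := hc f hfG (by omega)
  exact huw ((hmono u hu).trans (hmono w hw).symm)

lemma exp_mul_one_sub_pow_le {p : ℝ} (hp0 : 0 ≤ p) (hp1 : p ≤ 1) (N : ℕ) :
    exp (p * N / 4) * (1 - p * (1 - exp (-1))) ^ N ≤ exp (-(p * N / 5)) := by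
  have hhalf := exp_neg_one_lt_half
  have hbase : 0 ≤ 1 - p * (1 - exp (-1)) := by nlinarith [exp_pos (-1)]
  have hpN : 0 ≤ p * N := by positivity
  calc exp (p * N / 4) * (1 - p * (1 - exp (-1))) ^ N
      ≤ exp (p * N / 4) * exp (-(p * (1 - exp (-1)))) ^ N := by
        gcongr
        exact one_sub_le_exp_neg _
    _ = exp (p * N / 4 - p * N * (1 - exp (-1))) := by
        rw [← exp_nat_mul, ← exp_add]
        ring_nf
    _ ≤ exp (-(p * N / 5)) := exp_le_exp.2 (by nlinarith)

lemma failureBound_le_two_mul_exp {β : Type*} [DecidableEq β] {p : ℝ} (hp0 : 0 ≤ p) (hp1 : p ≤ 1)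
    {B : Finset (Finset β)} {U : Finset β}
    (hB : ∑ S ∈ B, overlapWeight U S * p ^ #S ≤ p * #U / 20) :
    failureBound p (p * #U / 4) B U ≤ 2 * exp (-(p * #U / 5)) := by
  have hprod : exp (-(p * #U / 4)) * ∏ S ∈ B, (1 + overlapWeight U S * p ^ #S) ≤
      exp (-(p * #U / 5)) := by
    calc exp (-(p * #U / 4)) * ∏ S ∈ B, (1 + overlapWeight U S * p ^ #S)
        ≤ exp (-(p * #U / 4)) * exp (p * #U / 20) := by
          gcongr
          refine (prod_one_add_le_exp_sum B fun S => ?_).trans (exp_le_exp.2 hB)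
          exact mul_nonneg (overlapWeight_nonneg U S) (by positivity)
      _ = exp (-(p * #U / 5)) := by
          rw [← exp_add]
          ring_nf
  rw [failureBound, two_mul]
  exact add_le_add (exp_mul_one_sub_pow_le hp0 hp1 #U) hprod

lemma card_powersetCard_univ_mul_exp_lt {n : ℕ} (hn : 0 < n) (t : ℕ) {x : ℝ}
    (hx : t * log n + 2 ≤ x) :
    #(powersetCard t (univ : Finset (Fin n))) * (2 * exp (-x)) < 1 / 3 := by
  have hexp : exp (-2) < 1 / 6 := by
    rw [exp_neg, inv_lt_comm₀ (exp_pos _) (by norm_num), show (2 : ℝ) = 1 + 1 by norm_num, exp_add]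
    nlinarith [exp_one_gt_d9]
  have hcard : (#(powersetCard t (univ : Finset (Fin n))) : ℝ) ≤ exp (t * log n) := by
    rw [exp_nat_mul, exp_log (by exact_mod_cast hn), card_powersetCard, card_univ, Fintype.card_fin]
    exact_mod_cast Nat.choose_le_pow n t
  calc #(powersetCard t (univ : Finset (Fin n))) * (2 * exp (-x))
      ≤ exp (t * log n) * (2 * exp (-(t * log n + 2))) := by gcongr
    _ = 2 * exp (-2) := by
        rw [mul_left_comm, ← exp_add]
        ring_nf
    _ < 1 / 3 := by linarith

lemma sum_failureBound_powersetCard_lt {r n t : ℕ} (hn : 0 < n) {p : ℝ} (hp0 : 0 ≤ p) (hp1 : p ≤ 1)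
    {B : Finset (Finset (Finset (Fin n)))}
    (hB : ∀ T ∈ powersetCard t univ,
      ∑ S ∈ B, overlapWeight (powersetCard r T) S * p ^ #S ≤ p * t.choose r / 20)
    (hlog : t * log n + 2 ≤ p * t.choose r / 5) :
    ∑ U ∈ (powersetCard t univ).image (powersetCard r),
      failureBound p (p * t.choose r / 4) B U < 1 / 3 := by
  have hfailure : ∀ U ∈ (powersetCard t univ).image (powersetCard r),
      failureBound p (p * t.choose r / 4) B U ≤ 2 * exp (-(p * t.choose r / 5)) := by
    refine forall_mem_image.2 fun T hT => ?_
    have hU : #(powersetCard r T) = t.choose r := by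
      rw [card_powersetCard, (mem_powersetCard.1 hT).2]
    have hBT := hB T hT
    rw [← hU] at hBT ⊢
    exact failureBound_le_two_mul_exp hp0 hp1 hBT
  calc ∑ U ∈ (powersetCard t univ).image (powersetCard r), failureBound p (p * t.choose r / 4) B U
      ≤ #((powersetCard t (univ : Finset (Fin n))).image (powersetCard r)) *
          (2 * exp (-(p * t.choose r / 5))) :=
        (sum_le_card_nsmul _ _ _ hfailure).trans_eq (nsmul_eq_mul _ _)
    _ ≤ #(powersetCard t (univ : Finset (Fin n))) * (2 * exp (-(p * t.choose r / 5))) := by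
        gcongr
        exact card_image_le
    _ < 1 / 3 := card_powersetCard_univ_mul_exp_lt hn t hlog

variable {ι : Type*} [Fintype ι] {r n t k : ℕ} {v a : ι → ℕ} {H : ∀ i, Finset (Finset (Fin (v i)))}

lemma sum_biUnion_copies_overlapWeight_le (hH : ∀ i, IsRGraph r (H i)) (ha0 : ∀ i, 0 < a i)
    (ha : ∀ i, ∀ h ∈ H i, a i ≤ autFixCount (H i) h) {p : ℝ} (hp : 0 ≤ p) (T : Finset (Fin n)) :
    ∑ S ∈ univ.biUnion fun i => copies (H i) (Fin n),
        overlapWeight (powersetCard r T) S * p ^ #S ≤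
      ∑ i, copyWeightBound p r n #T (v i) #(H i) (a i) := by
  refine (sum_biUnion_le_sum_sum _ _ fun S => mul_nonneg (overlapWeight_nonneg _ S)
    (by positivity)).trans (sum_le_sum fun i _ => ?_)
  simpa using sum_copies_overlapWeight_le (hH i) (ha0 i) (ha i) hp T

theorem exists_free_not_hypColorable (hr : 2 ≤ r) (hH : ∀ i, IsRGraph r (H i))
    (hne : ∀ i, (H i).Nonempty) (ha0 : ∀ i, 0 < a i)
    (ha : ∀ i, ∀ h ∈ H i, a i ≤ autFixCount (H i) h) {p M : ℝ} (hp0 : 0 ≤ p) (hp1 : p ≤ 1)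
    (hn : 0 < n) (hM : 0 < M) (hk : k * (t - 1) < n)
    (hcopies : ∑ i, copyWeightBound p r n t (v i) #(H i) (a i) ≤ p * t.choose r / 20)
    (hlog : t * log n + 2 ≤ p * t.choose r / 5) (hedges : p * n.choose r ≤ 2 / 3 * M) :
    ∃ G : Finset (Finset (Fin n)), IsRGraph r G ∧ (∀ i, ¬ HasCopy (H i) G) ∧
      ¬ HypColorable G k ∧ #G < M := by
  let B : Finset (Finset (Finset (Fin n))) := univ.biUnion fun i => copies (H i) (Fin n)
  have hBne : ∀ S ∈ B, S.Nonempty := fun S hS => by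
    obtain ⟨i, -, hS⟩ := mem_biUnion.1 hS
    exact card_pos.1 ((card_of_mem_copies hS).symm ▸ (hne i).card_pos)
  have hweight : ∀ T ∈ powersetCard t univ,
      ∑ S ∈ B, overlapWeight (powersetCard r T) S * p ^ #S ≤ p * t.choose r / 20 := fun T hT =>
    (sum_biUnion_copies_overlapWeight_le hH ha0 ha hp0 T).trans
      ((mem_powersetCard.1 hT).2.symm ▸ hcopies)
  have hratio : p * #(powersetCard r (univ : Finset (Fin n))) / M ≤ 2 / 3 := by
    rwa [card_powersetCard, card_univ, Fintype.card_fin, div_le_iff₀ hM]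
  obtain ⟨G, hG, hGM, hfree, hmeet⟩ := exists_subset_avoiding_meeting hp0 hp1 hBne
    (forall_mem_image.2 fun T _ => powersetCard_mono (subset_univ T)) hM
    ((add_lt_add_of_lt_of_le (sum_failureBound_powersetCard_lt hn hp0 hp1 hweight hlog)
      hratio).trans_eq (by norm_num))
  refine ⟨G, fun f hf => (mem_powersetCard.1 (hG hf)).2, fun i hcopy => ?_,
    not_hypColorable_of_forall_powersetCard_inter_nonempty hr (by simpa using hk)
      fun T hT => hmeet _ (mem_image_of_mem _ hT), hGM⟩
  obtain ⟨S, hS, hSG⟩ := hasCopy_iff_exists_mem_copies_subset.1 hcopy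
  exact hfree S (mem_biUnion.2 ⟨i, mem_univ i, hS⟩) hSG

end FiniteDeletion

section Asymptotics

open Filter Topology Asymptotics Real Finset

section Scale

/-- The real number whose ceiling is used as the number of vertices for `k` colors. -/
noncomputable def vertexScale (K B : ℝ) (d k : ℕ) : ℝ :=
  (K * ((k : ℝ) ^ d * log k)) ^ (1 / B)

/-- The number of vertices used for `k` colors. -/
noncomputable def vertexCount (K B : ℝ) (d k : ℕ) : ℕ :=
  ⌈vertexScale K B d k⌉₊

/-- The size of the vertex sets that have to contain an edge: the least integer that is at least
`1 / k` times the number of vertices. -/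
noncomputable def targetSize (K B : ℝ) (d k : ℕ) : ℕ :=
  ⌈(vertexCount K B d k : ℝ) / k⌉₊

variable {K B : ℝ} {d k : ℕ}

lemma mul_targetSize_sub_one_lt (hk : 0 < k) (hn : 0 < vertexCount K B d k) :
    k * (targetSize K B d k - 1) < vertexCount K B d k := by
  have hk' : (0 : ℝ) < k := by exact_mod_cast hk
  have ht : 0 < targetSize K B d k := Nat.ceil_pos.2 (by positivity)
  have hlt : (targetSize K B d k : ℝ) < vertexCount K B d k / k + 1 :=
    Nat.ceil_lt_add_one (by positivity)
  rw [← sub_lt_iff_lt_add, ← Nat.cast_pred ht, lt_div_iff₀' hk'] at hlt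
  exact_mod_cast hlt

lemma isEquivalent_ceil_of_tendsto_atTop {u : ℕ → ℝ} (hu : Tendsto u atTop atTop) :
    (fun k => (⌈u k⌉₊ : ℝ)) ~[atTop] u :=
  isEquivalent_nat_ceil.comp_tendsto hu

lemma vertexScale_nonneg (hK : 0 ≤ K) (B : ℝ) (d k : ℕ) : 0 ≤ vertexScale K B d k :=
  rpow_nonneg (mul_nonneg hK (mul_nonneg (by positivity) (log_natCast_nonneg k))) _

lemma vertexScale_rpow (hK : 0 ≤ K) (B : ℝ) (d k : ℕ) (q : ℝ) :
    vertexScale K B d k ^ q = (K * ((k : ℝ) ^ d * log k)) ^ (q / B) := by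
  have := log_natCast_nonneg k
  rw [vertexScale, ← rpow_mul (by positivity), one_div_mul_eq_div]

lemma tendsto_log_natCast_atTop : Tendsto (fun k : ℕ => log k) atTop atTop :=
  tendsto_log_atTop.comp tendsto_natCast_atTop_atTop

lemma tendsto_vertexScale_div_atTop (hK : 0 < K) (hB : 0 < B) (hBd : B < d) :
    Tendsto (fun k => vertexScale K B d k / k) atTop atTop := by
  have hlim : Tendsto (fun k : ℕ => (K * ((k : ℝ) ^ ((d : ℝ) - B) * log k)) ^ (1 / B))
      atTop atTop :=
    (tendsto_rpow_atTop (by positivity)).comp ((((tendsto_rpow_atTop (sub_pos.2 hBd)).comp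
      tendsto_natCast_atTop_atTop).atTop_mul_atTop₀ tendsto_log_natCast_atTop).const_mul_atTop hK)
  refine hlim.congr' ?_
  filter_upwards [eventually_gt_atTop 0] with k hk
  have hk : (0 : ℝ) < k := by exact_mod_cast hk
  have := log_natCast_nonneg k
  calc (K * ((k : ℝ) ^ ((d : ℝ) - B) * log k)) ^ (1 / B)
      = (K * ((k : ℝ) ^ d * log k) / (k : ℝ) ^ B) ^ (1 / B) := by
        rw [rpow_sub hk, rpow_natCast]
        ring_nf
    _ = vertexScale K B d k / k := by
        rw [div_rpow (by positivity) (by positivity), ← rpow_mul hk.le, mul_one_div_cancel hB.ne',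
          rpow_one, vertexScale]

lemma tendsto_vertexScale_atTop (hK : 0 < K) (hB : 0 < B) (hBd : B < d) :
    Tendsto (vertexScale K B d) atTop atTop := by
  refine tendsto_atTop_mono' _ ?_ (tendsto_vertexScale_div_atTop hK hB hBd)
  filter_upwards [eventually_ge_atTop 1] with k hk
  exact div_le_self (vertexScale_nonneg hK.le B d k) (by exact_mod_cast hk)

lemma isEquivalent_log_vertexScale (hK : 0 < K) (hd : 0 < d) (hB : 0 < B) :
    (fun k => log (vertexScale K B d k)) ~[atTop] fun k => d / B * log k := by
  have hlog : (fun x => log K + log x) =o[atTop] fun x => x :=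
    (isLittleO_const_id_atTop _).add isLittleO_log_id_atTop
  have herror : (fun k : ℕ => 1 / B * (log K + log (log k))) =o[atTop] fun k : ℕ => d / B * log k :=
    ((hlog.comp_tendsto tendsto_log_natCast_atTop).const_mul_left _).const_mul_right (by positivity)
  refine (IsEquivalent.refl.add_isLittleO herror).congr_left ?_
  filter_upwards [tendsto_log_natCast_atTop.eventually_gt_atTop 0, eventually_gt_atTop 0]
    with k hlogk hk
  have : (0 : ℝ) < k := by exact_mod_cast hk
  rw [vertexScale, log_rpow (by positivity), log_mul hK.ne' (by positivity),
    log_mul (by positivity) hlogk.ne', log_pow, Pi.add_apply]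
  ring

lemma isEquivalent_vertexCount (hK : 0 < K) (hB : 0 < B) (hBd : B < d) :
    (fun k => (vertexCount K B d k : ℝ)) ~[atTop] vertexScale K B d :=
  isEquivalent_ceil_of_tendsto_atTop (tendsto_vertexScale_atTop hK hB hBd)

lemma tendsto_vertexCount_atTop (hK : 0 < K) (hB : 0 < B) (hBd : B < d) :
    Tendsto (vertexCount K B d) atTop atTop :=
  tendsto_nat_ceil_atTop.comp (tendsto_vertexScale_atTop hK hB hBd)

lemma isEquivalent_log_vertexCount (hK : 0 < K) (hB : 0 < B) (hBd : B < d) :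
    (fun k => log (vertexCount K B d k)) ~[atTop] fun k => d / B * log k :=
  ((isEquivalent_vertexCount hK hB hBd).log (tendsto_vertexScale_atTop hK hB hBd)).trans
    (isEquivalent_log_vertexScale hK (by exact_mod_cast hB.trans hBd) hB)

lemma isEquivalent_vertexCount_div (hK : 0 < K) (hB : 0 < B) (hBd : B < d) :
    (fun k => (vertexCount K B d k : ℝ) / k) ~[atTop] fun k => vertexScale K B d k / k :=
  (isEquivalent_vertexCount hK hB hBd).div IsEquivalent.refl

lemma tendsto_vertexCount_div_atTop (hK : 0 < K) (hB : 0 < B) (hBd : B < d) :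
    Tendsto (fun k => (vertexCount K B d k : ℝ) / k) atTop atTop :=
  (isEquivalent_vertexCount_div hK hB hBd).symm.tendsto_atTop
    (tendsto_vertexScale_div_atTop hK hB hBd)

lemma tendsto_targetSize_atTop (hK : 0 < K) (hB : 0 < B) (hBd : B < d) :
    Tendsto (targetSize K B d) atTop atTop :=
  tendsto_nat_ceil_atTop.comp (tendsto_vertexCount_div_atTop hK hB hBd)

lemma isEquivalent_targetSize (hK : 0 < K) (hB : 0 < B) (hBd : B < d) :
    (fun k => (targetSize K B d k : ℝ)) ~[atTop] fun k => vertexScale K B d k / k :=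
  (isEquivalent_ceil_of_tendsto_atTop (tendsto_vertexCount_div_atTop hK hB hBd)).trans
    (isEquivalent_vertexCount_div hK hB hBd)

lemma tendsto_targetSize_div_vertexCount (hK : 0 < K) (hB : 0 < B) (hBd : B < d) :
    Tendsto (fun k => (targetSize K B d k : ℝ) / vertexCount K B d k) atTop (𝓝 0) := by
  refine (((isEquivalent_targetSize hK hB hBd).div
    (isEquivalent_vertexCount hK hB hBd)).trans_eventuallyEq ?_).symm.tendsto_nhds
      tendsto_one_div_atTop_nhds_zero_nat
  filter_upwards [(tendsto_vertexScale_atTop hK hB hBd).eventually_gt_atTop 0] with k hX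
  rw [Pi.div_apply]
  field_simp

end Scale

lemma isEquivalent_choose_of_tendsto_atTop {u : ℕ → ℕ} (hu : Tendsto u atTop atTop) (r : ℕ) :
    (fun k => ((u k).choose r : ℝ)) ~[atTop] fun k => (u k : ℝ) ^ r / r.factorial :=
  (isEquivalent_choose r).comp_tendsto hu

section EdgeProbability

variable {K θ c : ℝ} {d : ℕ}

/-- The edge probability `c * n ^ (-θ)` of the random hypergraph on `n` vertices. -/
noncomputable def edgeProb (c θ : ℝ) (n : ℕ) : ℝ :=
  c * (n : ℝ) ^ (-θ)

lemma edgeProb_pos (hc : 0 < c) (θ : ℝ) {n : ℕ} (hn : 0 < n) : 0 < edgeProb c θ n :=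
  mul_pos hc (rpow_pos_of_pos (by exact_mod_cast hn) _)

lemma tendsto_edgeProb_zero (hθ : 0 < θ) (c : ℝ) : Tendsto (edgeProb c θ) atTop (𝓝 0) := by
  have hlim := ((tendsto_rpow_neg_atTop hθ).comp tendsto_natCast_atTop_atTop).const_mul c
  rwa [mul_zero] at hlim

lemma edgeProb_pow_mul_pow {n : ℕ} (hn : 0 < n) (c θ : ℝ) (a b : ℕ) :
    edgeProb c θ n ^ a * (n : ℝ) ^ b = edgeProb (c ^ a) (θ * a - b) n := by
  have hn : (0 : ℝ) < n := by exact_mod_cast hn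
  rw [edgeProb, edgeProb, mul_pow, mul_assoc, ← rpow_natCast _ b, ← rpow_mul_natCast hn.le,
    ← rpow_add hn]
  ring_nf

lemma tendsto_edgeProb_pow_mul_pow (c : ℝ) {a b : ℕ} (hab : (b : ℝ) ≤ θ * a) :
    Tendsto (fun n => edgeProb c θ n ^ a * (n : ℝ) ^ b) atTop
      (𝓝 (if (b : ℝ) = θ * a then c ^ a else 0)) := by
  have heq : edgeProb (c ^ a) (θ * a - b) =ᶠ[atTop]
      fun n => edgeProb c θ n ^ a * (n : ℝ) ^ b := by
    filter_upwards [eventually_gt_atTop 0] with n hn using (edgeProb_pow_mul_pow hn c θ a b).symm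
  refine Tendsto.congr' heq ?_
  split_ifs with h
  · have hconst : edgeProb (c ^ a) (θ * a - b) = fun _ => c ^ a := by
      ext n
      rw [edgeProb, h, sub_self, neg_zero, rpow_zero, mul_one]
    exact hconst ▸ tendsto_const_nhds
  · exact tendsto_edgeProb_zero (sub_pos.2 (lt_of_le_of_ne hab h)) _

lemma isEquivalent_edgeProb_vertexCount (hK : 0 < K) (hθ0 : 0 < θ) (hθ : θ < d) (c : ℝ) :
    (fun k => edgeProb c θ (vertexCount K (d - θ) d k)) ~[atTop]
      fun k => c * vertexScale K (d - θ) d k ^ (-θ) :=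
  IsEquivalent.refl.mul ((isEquivalent_vertexCount hK (sub_pos.2 hθ) (by linarith)).rpow
    fun k => vertexScale_nonneg hK.le _ _ k)

lemma isEquivalent_edgeProb_mul_choose_vertexCount (hK : 0 < K) (hθ0 : 0 < θ) (hθ : θ < d)
    (c : ℝ) (r : ℕ) :
    (fun k => edgeProb c θ (vertexCount K (d - θ) d k) * (vertexCount K (d - θ) d k).choose r)
      ~[atTop] fun k => c / r.factorial * vertexScale K (d - θ) d k ^ (r - θ) := by
  have hB : 0 < d - θ := sub_pos.2 hθ
  have hBd : d - θ < d := sub_lt_self _ hθ0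
  have hchoose :=
    (isEquivalent_choose_of_tendsto_atTop (tendsto_vertexCount_atTop hK hB hBd) r).trans
      (((isEquivalent_vertexCount hK hB hBd).pow r).div IsEquivalent.refl)
  refine ((isEquivalent_edgeProb_vertexCount hK hθ0 hθ c).mul hchoose).trans_eventuallyEq ?_
  filter_upwards [(tendsto_vertexScale_atTop hK hB hBd).eventually_gt_atTop 0] with k hX
  rw [sub_eq_neg_add (r : ℝ), rpow_add hX, rpow_natCast]
  simp only [Pi.mul_apply, Pi.div_apply, Pi.pow_apply]
  ring

lemma isEquivalent_edgeProb_mul_choose_targetSize (hK : 0 < K) (hθ0 : 0 < θ) (hθ : θ < d)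
    (c : ℝ) :
    (fun k => edgeProb c θ (vertexCount K (d - θ) d k) *
        (targetSize K (d - θ) d k).choose (d + 1)) ~[atTop]
      fun k => c * K / (d + 1).factorial * (vertexScale K (d - θ) d k / k * log k) := by
  have hB : 0 < d - θ := sub_pos.2 hθ
  have hBd : d - θ < d := sub_lt_self _ hθ0
  have hchoose :=
    (isEquivalent_choose_of_tendsto_atTop (tendsto_targetSize_atTop hK hB hBd) (d + 1)).trans
      (((isEquivalent_targetSize hK hB hBd).pow (d + 1)).div IsEquivalent.refl)
  refine ((isEquivalent_edgeProb_vertexCount hK hθ0 hθ c).mul hchoose).trans_eventuallyEq ?_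
  filter_upwards [(tendsto_vertexScale_atTop hK hB hBd).eventually_gt_atTop 0,
    eventually_gt_atTop 0] with k hX hk
  have : (0 : ℝ) < k := by exact_mod_cast hk
  have hscale : vertexScale K (d - θ) d k ^ (-θ) * vertexScale K (d - θ) d k ^ d =
      K * ((k : ℝ) ^ d * log k) := by
    rw [← rpow_natCast, ← rpow_add hX, neg_add_eq_sub, vertexScale_rpow hK.le, div_self hB.ne',
      rpow_one]
  calc c * vertexScale K (d - θ) d k ^ (-θ) *
        ((vertexScale K (d - θ) d k / k) ^ (d + 1) / (d + 1).factorial)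
      = c / (d + 1).factorial * (vertexScale K (d - θ) d k / k) / (k : ℝ) ^ d *
          (vertexScale K (d - θ) d k ^ (-θ) * vertexScale K (d - θ) d k ^ d) := by
        rw [pow_succ, div_pow]
        ring
    _ = c * K / (d + 1).factorial * (vertexScale K (d - θ) d k / k * log k) := by
        rw [hscale]
        field_simp

lemma tendsto_copyWeightBound_div {n t : ℕ → ℕ} (hn : Tendsto n atTop atTop)
    (ht : Tendsto t atTop atTop) (htn : Tendsto (fun k => (t k : ℝ) / n k) atTop (𝓝 0))
    {r m e : ℕ} (hm : r < m) (he : 1 ≤ e) (hc : 0 < c) (hθ : (m : ℝ) - r ≤ θ * (e - 1)) (a : ℕ) :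
    Tendsto (fun k => copyWeightBound (edgeProb c θ (n k)) r (n k) (t k) m e a /
        (edgeProb c θ (n k) * (t k).choose r)) atTop
      (𝓝 ((exp 1 - 1) * r.factorial *
        if (m : ℝ) - r = θ * (e - 1) then e * c ^ (e - 1) / a else 0)) := by
  have hchoose : Tendsto (fun k => (t k : ℝ) ^ r / (t k).choose r) atTop (𝓝 r.factorial) := by
    refine ((IsEquivalent.refl.div
      (isEquivalent_choose_of_tendsto_atTop ht r)).trans_eventuallyEq ?_).symm.tendsto_nhds
        tendsto_const_nhds
    filter_upwards [ht.eventually_gt_atTop 0] with k hk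
    have : (0 : ℝ) < t k := by exact_mod_cast hk
    simp only [Pi.div_apply]
    field_simp
  rw [← Nat.cast_sub hm.le, ← Nat.cast_pred he] at hθ ⊢
  have hlim := ((tendsto_edgeProb_pow_mul_pow c hθ).comp hn).mul
    (((hchoose.mul htn).const_mul (exp e * (e * e))).const_add
      ((exp 1 - 1) * (e * r.factorial / a)))
  refine (hlim.congr' ?_).trans_eq ?_
  · filter_upwards [hn.eventually_gt_atTop 0, ht.eventually_ge_atTop r] with k hnk htk
    have : (0 : ℝ) < n k := by exact_mod_cast hnk
    have hp0 := edgeProb_pos hc θ hnk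
    have hC0 : (0 : ℝ) < (t k).choose r := by exact_mod_cast Nat.choose_pos htk
    have hpow : edgeProb c θ (n k) ^ e = edgeProb c θ (n k) ^ (e - 1) * edgeProb c θ (n k) :=
      (pow_sub_one_mul (by lia) _).symm
    have hn_pow : (n k : ℝ) ^ (m - r) = (n k : ℝ) ^ (m - (r + 1)) * n k := by
      rw [← pow_succ]
      congr 1
      lia
    simp only [Function.comp_apply, copyWeightBound, hpow, hn_pow, pow_succ (t k : ℝ)]
    field_simp
  · split_ifs <;> ring_nf

lemma eventually_sum_copyWeightBound_le {ι : Type*} [Fintype ι] {n t : ℕ → ℕ}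
    (hn : Tendsto n atTop atTop) (ht : Tendsto t atTop atTop)
    (htn : Tendsto (fun k => (t k : ℝ) / n k) atTop (𝓝 0)) {r : ℕ} {m e a : ι → ℕ}
    (hm : ∀ i, r < m i) (he : ∀ i, 1 ≤ e i) (hc : 0 < c)
    (hθ : ∀ i, (m i : ℝ) - r ≤ θ * (e i - 1))
    (hsum : r.factorial * ∑ i, (if (m i : ℝ) - r = θ * (e i - 1) then
      e i * c ^ (e i - 1) / a i else 0) ≤ 1 / 50) :
    ∀ᶠ k in atTop,
      ∑ i, copyWeightBound (edgeProb c θ (n k)) r (n k) (t k) (m i) (e i) (a i) ≤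
        edgeProb c θ (n k) * (t k).choose r / 20 := by
  have hlim := tendsto_finsetSum univ fun i _ =>
    tendsto_copyWeightBound_div hn ht htn (hm i) (he i) hc (hθ i) (a i)
  have hlt : ∑ i, (exp 1 - 1) * r.factorial * (if (m i : ℝ) - r = θ * (e i - 1) then
      e i * c ^ (e i - 1) / a i else 0) < 1 / 20 := by
    rw [← mul_sum, mul_assoc]
    have hexp : exp 1 - 1 < 2 := by linarith [exp_one_lt_d9]
    calc _ ≤ (exp 1 - 1) * (1 / 50) := by
          gcongr
          linarith [add_one_le_exp (1 : ℝ)]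
      _ < 1 / 20 := by linarith
  filter_upwards [hlim.eventually_lt_const hlt, hn.eventually_gt_atTop 0,
    ht.eventually_ge_atTop r] with k hk hnk htk
  have hpos : 0 < edgeProb c θ (n k) * (t k).choose r :=
    mul_pos (edgeProb_pos hc θ hnk) (by exact_mod_cast Nat.choose_pos htk)
  rw [← sum_div, div_lt_iff₀ hpos] at hk
  linarith

lemma tendsto_div_of_isEquivalent_const_mul {u w : ℕ → ℝ} {b : ℝ}
    (hu : u ~[atTop] fun k => b * w k) (hw : Tendsto w atTop atTop) :
    Tendsto (fun k => u k / w k) atTop (𝓝 b) := by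
  refine ((hu.div IsEquivalent.refl).trans_eventuallyEq ?_).symm.tendsto_nhds tendsto_const_nhds
  filter_upwards [hw.eventually_gt_atTop 0] with k hk
  exact mul_div_cancel_right₀ b hk.ne'

lemma eventually_targetSize_mul_log_add_two_le (hK : 0 < K) (hθ0 : 0 < θ) (hθ : θ < d)
    (hcK : c * K / (d + 1).factorial = 10 * (d / (d - θ))) :
    ∀ᶠ k in atTop,
      (targetSize K (d - θ) d k : ℝ) * log (vertexCount K (d - θ) d k) + 2 ≤
        edgeProb c θ (vertexCount K (d - θ) d k) *
          (targetSize K (d - θ) d k).choose (d + 1) / 5 := by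
  have hB : 0 < d - θ := sub_pos.2 hθ
  have hBd : d - θ < d := sub_lt_self _ hθ0
  have hdB : 0 < d / (d - θ) := div_pos (hθ0.trans hθ) hB
  have hw : Tendsto (fun k => vertexScale K (d - θ) d k / k * log k) atTop atTop :=
    (tendsto_vertexScale_div_atTop hK hB hBd).atTop_mul_atTop₀ tendsto_log_natCast_atTop
  have hlog := tendsto_div_of_isEquivalent_const_mul
    (((isEquivalent_targetSize hK hB hBd).mul
      (isEquivalent_log_vertexCount hK hB hBd)).trans_eventuallyEq
        (Eventually.of_forall fun k => mul_left_comm _ (d / (d - θ)) _)) hw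
  have hedges := tendsto_div_of_isEquivalent_const_mul
    (isEquivalent_edgeProb_mul_choose_targetSize hK hθ0 hθ c) hw
  have hlt : d / (d - θ) + 0 < c * K / (d + 1).factorial / 5 := by
    rw [hcK]
    linarith
  filter_upwards [(hlog.add (hw.const_div_atTop 2)).eventually_lt (hedges.div_const 5) hlt,
    hw.eventually_gt_atTop 0] with k hk hwk
  rw [← add_div, div_right_comm, div_lt_div_iff_of_pos_right hwk] at hk
  exact hk.le

lemma eventually_edgeProb_mul_choose_vertexCount_le (hK : 0 < K) (hθ0 : 0 < θ) (hθ : θ < d)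
    (hc : 0 < c) {r : ℕ} (hθr : θ < r) :
    ∀ᶠ k in atTop,
      edgeProb c θ (vertexCount K (d - θ) d k) * (vertexCount K (d - θ) d k).choose r ≤
        5 / 4 * (c / r.factorial * vertexScale K (d - θ) d k ^ (r - θ)) := by
  have hw : Tendsto (fun k => vertexScale K (d - θ) d k ^ (r - θ)) atTop atTop :=
    (tendsto_rpow_atTop (sub_pos.2 hθr)).comp
      (tendsto_vertexScale_atTop hK (sub_pos.2 hθ) (sub_lt_self _ hθ0))
  have hpos : 0 < c / r.factorial := by positivity
  have hlt : c / r.factorial < 5 / 4 * (c / r.factorial) := by linarith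
  filter_upwards [(tendsto_div_of_isEquivalent_const_mul
    (isEquivalent_edgeProb_mul_choose_vertexCount hK hθ0 hθ c r) hw).eventually_lt_const hlt,
    hw.eventually_gt_atTop 0] with k hk hwk
  rw [div_lt_iff₀ hwk, mul_assoc] at hk
  exact hk.le

theorem eventually_exists_free_not_hypColorable {ι : Type*} [Fintype ι] {v a : ι → ℕ}
    {H : ∀ i, Finset (Finset (Fin (v i)))} (hH : ∀ i, IsRGraph (d + 1) (H i))
    (hne : ∀ i, (H i).Nonempty) (hv : ∀ i, d + 1 < v i) (ha0 : ∀ i, 0 < a i)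
    (ha : ∀ i, ∀ f ∈ H i, a i ≤ autFixCount (H i) f) (hc : 0 < c) (hθ0 : 0 < θ) (hθd : θ < d)
    (hθ : ∀ i, (v i : ℝ) - (d + 1 : ℕ) ≤ θ * (#(H i) - 1))
    (hsum : (d + 1).factorial * ∑ i, (if (v i : ℝ) - (d + 1 : ℕ) = θ * (#(H i) - 1) then
      #(H i) * c ^ (#(H i) - 1) / a i else 0) ≤ 1 / 50) :
    ∀ᶠ k in atTop, ∃ (n : ℕ) (G : Finset (Finset (Fin n))),
      IsRGraph (d + 1) G ∧ (∀ i, ¬HasCopy (H i) G) ∧ ¬HypColorable G k ∧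
        (#G : ℝ) < 15 / 8 * (c / (d + 1).factorial *
          vertexScale (10 * ((d + 1).factorial / c) * (d / (d - θ))) (d - θ) d k ^
            ((d + 1 : ℕ) - θ)) := by
  set K : ℝ := 10 * ((d + 1).factorial / c) * (d / (d - θ)) with hK_def
  have hd : 0 < d := by exact_mod_cast hθ0.trans hθd
  have hB : 0 < d - θ := sub_pos.2 hθd
  have hBd : d - θ < d := sub_lt_self _ hθ0
  have hK : 0 < K := by positivity
  have hcK : c * K / (d + 1).factorial = 10 * (d / (d - θ)) := by
    rw [hK_def]
    field_simp
  have hn := tendsto_vertexCount_atTop hK hB hBd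
  filter_upwards [eventually_gt_atTop 0, hn.eventually_gt_atTop 0,
    (tendsto_vertexScale_atTop hK hB hBd).eventually_gt_atTop 0,
    ((tendsto_edgeProb_zero hθ0 c).comp hn).eventually_le_const one_pos,
    eventually_sum_copyWeightBound_le hn (tendsto_targetSize_atTop hK hB hBd)
      (tendsto_targetSize_div_vertexCount hK hB hBd) hv (fun i => (hne i).card_pos) hc hθ hsum,
    eventually_targetSize_mul_log_add_two_le hK hθ0 hθd hcK,
    eventually_edgeProb_mul_choose_vertexCount_le hK hθ0 hθd hc
      (hθd.trans (by exact_mod_cast d.lt_succ_self))]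
    with k hk0 hn0 hX hp1 hcopies hlog hedges
  exact ⟨vertexCount K (d - θ) d k, exists_free_not_hypColorable (by lia) hH hne ha0 ha
    (edgeProb_pos hc θ hn0).le hp1 hn0 (by positivity) (mul_targetSize_sub_one_lt hk0 hn0)
    hcopies hlog (by linarith)⟩

end EdgeProbability

end Asymptotics

section GeneralUpperBound

open Finset Real

/-- The density `(e - 1) / (v - r)` of an `r`-graph with `v` vertices and `e` edges, the quantity
that the paper's `ρ` maximizes over the nontrivial subhypergraphs. -/
noncomputable def density (r v e : ℕ) : ℝ :=
  ((e : ℝ) - 1) / ((v : ℝ) - r)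

/-- The constant `c_𝓗` of the upper bound, as a function of the minimal density `ρ` and the
numbers `c₁` and `c₂`. -/
noncomputable def upperBoundConst (r : ℕ) (ρ c₁ c₂ : ℝ) : ℝ :=
  2 * ((r.factorial : ℝ) / c₁) ^ (1 / ((r : ℝ) - 1 - 1 / ρ)) *
    c₂ ^ (((r : ℝ) - 1) * ((r : ℝ) - 1 / ρ) / ((r : ℝ) - 1 - 1 / ρ)) *
    (((r : ℝ) - 1) / ((r : ℝ) - 1 - 1 / ρ)) ^ (((r : ℝ) - 1 / ρ) / ((r : ℝ) - 1 - 1 / ρ))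

variable {r v e : ℕ} {ρ : ℝ}

lemma lt_of_density_pos (he : 1 ≤ e) (h : 0 < density r v e) : r < v := by
  have he : (0 : ℝ) ≤ e - 1 := sub_nonneg.2 (by exact_mod_cast he)
  have hv : (0 : ℝ) < v - r := (div_pos_iff.1 h).elim And.right
    fun hneg => absurd hneg.1 he.not_gt
  exact_mod_cast sub_pos.1 hv

lemma sub_le_of_le_density (hv : r < v) (hρ : 0 < ρ) (h : ρ ≤ density r v e) :
    (v : ℝ) - r ≤ 1 / ρ * (e - 1) := by
  have hv : (0 : ℝ) < v - r := sub_pos.2 (by exact_mod_cast hv)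
  rw [one_div_mul_eq_div, le_div_iff₀' hρ]
  exact (le_div_iff₀ hv).1 h

lemma sub_eq_iff_density_eq (hv : r < v) (hρ : 0 < ρ) :
    (v : ℝ) - r = 1 / ρ * (e - 1) ↔ density r v e = ρ := by
  have hv : (0 : ℝ) < v - r := sub_pos.2 (by exact_mod_cast hv)
  rw [density, one_div_mul_eq_div, eq_div_iff hρ.ne', div_eq_iff hv.ne', mul_comm, eq_comm]

lemma ten_le_div_of_sum_eq {ι : Type*} {s : Finset ι} {e a : ι → ℕ} {c F : ℝ} (hc : 0 < c)
    (hF : 0 < F) (hsum : ∑ i ∈ s, (e i : ℝ) * c ^ (e i - 1) / a i = 1 / (50 * F)) {i : ι}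
    (hi : i ∈ s) (he : 0 < e i) (ha : 0 < a i) :
    10 ≤ a i / (5 * e i * c ^ (e i - 1) * F) := by
  have hterm : (e i : ℝ) * c ^ (e i - 1) / a i ≤ 1 / (50 * F) := hsum ▸
    single_le_sum (f := fun i => (e i : ℝ) * c ^ (e i - 1) / a i) (fun i _ => by positivity) hi
  rw [div_le_div_iff₀ (by positivity) (by positivity)] at hterm
  rw [le_div_iff₀ (by positivity)]
  linarith

lemma mul_rpow_one_add_lt {F x Q D C β : ℝ} (hF : 0 < F) (hx : 0 < x) (hQ : 0 < Q) (hD : 0 < D)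
    (hβ : 0 < β) (hC : 10 ^ (1 / D) ≤ C) :
    15 / 8 * (F⁻¹ * (10 * F * x * Q) ^ (1 + β)) <
      2 * F ^ β * C ^ (D * (1 + β)) * x ^ (1 + β) * Q ^ (1 + β) := by
  have hten : (10 : ℝ) ^ (1 + β) ≤ C ^ (D * (1 + β)) :=
    calc (10 : ℝ) ^ (1 + β) = (10 ^ (1 / D)) ^ (D * (1 + β)) := by
          rw [← rpow_mul (by norm_num), ← mul_assoc, one_div_mul_cancel hD.ne', one_mul]
      _ ≤ C ^ (D * (1 + β)) := by gcongr
  calc 15 / 8 * (F⁻¹ * (10 * F * x * Q) ^ (1 + β))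
      = 15 / 8 * (F ^ β * 10 ^ (1 + β) * x ^ (1 + β) * Q ^ (1 + β)) := by
        rw [mul_rpow (by positivity) hQ.le, mul_rpow (by positivity) hx.le,
          mul_rpow (by norm_num) hF.le, rpow_add hF, rpow_one]
        field_simp
    _ < 2 * (F ^ β * 10 ^ (1 + β) * x ^ (1 + β) * Q ^ (1 + β)) := by
        gcongr
        norm_num
    _ = 2 * F ^ β * 10 ^ (1 + β) * x ^ (1 + β) * Q ^ (1 + β) := by ring
    _ ≤ 2 * F ^ β * C ^ (D * (1 + β)) * x ^ (1 + β) * Q ^ (1 + β) := by gcongr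

lemma mul_vertexScale_rpow_lt_upperBoundConst_mul {d k : ℕ} {c₁ c₂ : ℝ} (hρ : 0 < ρ)
    (hρd : 1 / ρ < d) (hc₁ : 0 < c₁) (hc₂ : 10 ^ (1 / (d : ℝ)) ≤ c₂) (hk : 2 ≤ k) :
    15 / 8 * (c₁ / (d + 1).factorial *
      vertexScale (10 * ((d + 1).factorial / c₁) * (d / (d - 1 / ρ))) (d - 1 / ρ) d k ^
        ((d + 1 : ℕ) - 1 / ρ)) <
    upperBoundConst (d + 1) ρ c₁ c₂ *
      ((k : ℝ) ^ d * log k) ^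
        ((((d + 1 : ℕ) : ℝ) - 1 / ρ) / (((d + 1 : ℕ) : ℝ) - 1 - 1 / ρ)) := by
  have hd : (0 : ℝ) < d := (one_div_pos.2 hρ).trans hρd
  have hB : 0 < d - 1 / ρ := sub_pos.2 hρd
  have hlog : 0 < log k := log_pos (by exact_mod_cast hk)
  have hexponent : ((d : ℝ) + 1 - 1 / ρ) / (d - 1 / ρ) = 1 + 1 / (d - 1 / ρ) := by
    rw [add_sub_right_comm, add_div, div_self hB.ne']
  rw [vertexScale_rpow (by positivity), ← inv_div _ c₁, upperBoundConst]
  push_cast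
  rw [add_sub_cancel_right, mul_div_assoc (d : ℝ), hexponent]
  exact mul_rpow_one_add_lt (by positivity) (by positivity) (by positivity) hd (by positivity) hc₂

theorem general_upper_bound_general {ι : Type*} [Fintype ι] {r : ℕ} (hr : 2 ≤ r) {v : ι → ℕ}
    {H : ∀ i, Finset (Finset (Fin (v i)))} (hH : ∀ i, IsRGraph r (H i)) {ρ : ℝ}
    (hρ : 1 / ((r : ℝ) - 1) < ρ) (hdensity : ∀ i, ρ ≤ density r (v i) #(H i)) {α : ι → ℕ}
    (hα : ∀ i, (∃ f ∈ H i, autFixCount (H i) f = α i) ∧ ∀ f ∈ H i, α i ≤ autFixCount (H i) f)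
    {c₁ : ℝ} (hc₁pos : 0 < c₁)
    (hc₁ : ∑ i with density r (v i) #(H i) = ρ, (#(H i) : ℝ) * c₁ ^ (#(H i) - 1) / α i =
      1 / (50 * r.factorial)) {c₂ : ℝ}
    (hc₂ : IsGreatest {x : ℝ | ∃ i, density r (v i) #(H i) = ρ ∧
      x = (α i / (5 * #(H i) * c₁ ^ (#(H i) - 1) * r.factorial)) ^ (1 / ((r : ℝ) - 1))} c₂) :
    ∃ k₀ : ℕ, ∀ k : ℕ, k₀ ≤ k → ∃ (n : ℕ) (G : Finset (Finset (Fin n))),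
      IsRGraph r G ∧ (∀ i, ¬HasCopy (H i) G) ∧ ¬HypColorable G k ∧
        (#G : ℝ) < upperBoundConst r ρ c₁ c₂ *
          ((k : ℝ) ^ (r - 1) * log k) ^ (((r : ℝ) - 1 / ρ) / ((r : ℝ) - 1 - 1 / ρ)) := by
  obtain ⟨d, rfl⟩ : ∃ d, r = d + 1 := ⟨r - 1, by lia⟩
  have hcast : ((d + 1 : ℕ) : ℝ) - 1 = d := by simp
  rw [hcast] at hρ hc₂
  have hd : (0 : ℝ) < d := by exact_mod_cast Nat.le_of_succ_le_succ hr
  have hρ0 : 0 < ρ := (one_div_pos.2 hd).trans hρ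
  have hne : ∀ i, (H i).Nonempty := fun i => (hα i).1.imp fun _ => And.left
  have hv : ∀ i, d + 1 < v i := fun i =>
    lt_of_density_pos (hne i).card_pos (hρ0.trans_le (hdensity i))
  have hα0 : ∀ i, 0 < α i := fun i => by
    obtain ⟨f, -, hf⟩ := (hα i).1
    exact hf ▸ autFixCount_pos _ _
  have hc₂_ge : 10 ^ (1 / (d : ℝ)) ≤ c₂ := by
    obtain ⟨i, hi, rfl⟩ := hc₂.1
    gcongr
    exact ten_le_div_of_sum_eq hc₁pos (by positivity) hc₁ (mem_filter.2 ⟨mem_univ i, hi⟩)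
      (hne i).card_pos (hα0 i)
  have hsum : (d + 1).factorial * ∑ i, (if (v i : ℝ) - (d + 1 : ℕ) = 1 / ρ * (#(H i) - 1) then
      #(H i) * c₁ ^ (#(H i) - 1) / α i else 0) ≤ 1 / 50 := by
    simp_rw [sub_eq_iff_density_eq (hv _) hρ0]
    rw [← sum_filter, hc₁]
    exact le_of_eq (by field_simp)
  obtain ⟨k₀, hk₀⟩ := Filter.eventually_atTop.1 (eventually_exists_free_not_hypColorable hH hne
    hv hα0 (fun i => (hα i).2) hc₁pos (one_div_pos.2 hρ0) ((one_div_lt hd hρ0).1 hρ)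
    (fun i => sub_le_of_le_density (hv i) hρ0 (hdensity i)) hsum)
  refine ⟨max k₀ 2, fun k hk => ?_⟩
  obtain ⟨n, G, hG, hfree, hcol, hlt⟩ := hk₀ k (le_of_max_le_left hk)
  exact ⟨n, G, hG, hfree, hcol, hlt.trans (mul_vertexScale_rpow_lt_upperBoundConst_mul hρ0
    ((one_div_lt hd hρ0).1 hρ) hc₁pos hc₂_ge (le_of_max_le_right hk))⟩

end GeneralUpperBound

/-- **Theorem (general upper bound).** Let `𝓗 = {H₁, …, H_ℓ}` be a family of nontrivial
balanced `r`-graphs, `Hᵢ` having `v i` vertices (all spanned by edges), `e i` edges and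
density `ρᵢ = (eᵢ-1)/(vᵢ-r)`, sorted so that `ρ₁ ≤ ⋯ ≤ ρ_ℓ`, with
`ρ := ρ₁ = ⋯ = ρ_s < ρ_{s+1}` and `ρ > 1/(r-1)`. With `αᵢ` the minimum over edges `ed` of
`Hᵢ` of the number of automorphisms of `Hᵢ` fixing `ed`, `c₁` the positive solution of
`∑_{i≤s} eᵢ x^(eᵢ-1)/αᵢ = 1/(50 r!)`, and
`c₂ = max_{i≤s} (αᵢ/(5 eᵢ c₁^(eᵢ-1) r!))^(1/(r-1))`, for all sufficiently large `k` there
is an `𝓗`-free `r`-graph with chromatic number greater than `k` and fewer than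
`c_𝓗 (k^(r-1) log k)^((r-1/ρ)/(r-1-1/ρ))` edges, where
`c_𝓗 = 2 (r!/c₁)^(1/(r-1-1/ρ)) c₂^((r-1)(r-1/ρ)/(r-1-1/ρ)) ((r-1)/(r-1-1/ρ))^((r-1/ρ)/(r-1-1/ρ))`. -/
theorem general_upper_bound
    (r ℓ s : ℕ) (hr : 2 ≤ r) (hs1 : 1 ≤ s) (hsℓ : s ≤ ℓ)
    (v e : Fin ℓ → ℕ)
    (H : ∀ i : Fin ℓ, Finset (Finset (Fin (v i))))
    (hHr : ∀ i, IsRGraph r (H i))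
    (hspan : ∀ i, (H i).sup id = Finset.univ)
    (hecard : ∀ i, (H i).card = e i)
    (hnontriv : ∀ i, 2 ≤ e i)
    (ρ : ℝ)
    (hρeq : ∀ i : Fin ℓ, (i : ℕ) < s → ((e i : ℝ) - 1) / ((v i : ℝ) - r) = ρ)
    (hρlt : ∀ i : Fin ℓ, s ≤ (i : ℕ) → ρ < ((e i : ℝ) - 1) / ((v i : ℝ) - r))
    (hsorted : ∀ i j : Fin ℓ, i ≤ j →
      ((e i : ℝ) - 1) / ((v i : ℝ) - r) ≤ ((e j : ℝ) - 1) / ((v j : ℝ) - r))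
    (hbalanced : ∀ i : Fin ℓ, ∀ E' ⊆ H i, 2 ≤ E'.card →
      ((E'.card : ℝ) - 1) / (((E'.sup id).card : ℝ) - r) ≤ ((e i : ℝ) - 1) / ((v i : ℝ) - r))
    (hρ : 1 / ((r : ℝ) - 1) < ρ)
    (α : Fin ℓ → ℕ)
    (hα : ∀ i : Fin ℓ,
      (∃ ed ∈ H i, autFixCount (H i) ed = α i) ∧ ∀ ed ∈ H i, α i ≤ autFixCount (H i) ed)
    (c₁ : ℝ) (hc₁pos : 0 < c₁)
    (hc₁ : ∑ i ∈ Finset.univ.filter (fun i : Fin ℓ => (i : ℕ) < s),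
        (e i : ℝ) * c₁ ^ (e i - 1) / (α i : ℝ) = 1 / (50 * (r.factorial : ℝ)))
    (c₂ : ℝ)
    (hc₂ : IsGreatest {x : ℝ | ∃ i : Fin ℓ, (i : ℕ) < s ∧
        x = ((α i : ℝ) / (5 * (e i : ℝ) * c₁ ^ (e i - 1) * (r.factorial : ℝ)))
          ^ (1 / ((r : ℝ) - 1))} c₂) :
    ∃ k₀ : ℕ, ∀ k : ℕ, k₀ ≤ k →
      ∃ (n : ℕ) (G : Finset (Finset (Fin n))),
        IsRGraph r G ∧
        (∀ i : Fin ℓ, ¬ HasCopy (H i) G) ∧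
        ¬ HypColorable G k ∧
        (G.card : ℝ) <
          (2 * ((r.factorial : ℝ) / c₁) ^ (1 / ((r : ℝ) - 1 - 1 / ρ)) *
            c₂ ^ (((r : ℝ) - 1) * ((r : ℝ) - 1 / ρ) / ((r : ℝ) - 1 - 1 / ρ)) *
            (((r : ℝ) - 1) / ((r : ℝ) - 1 - 1 / ρ))
              ^ (((r : ℝ) - 1 / ρ) / ((r : ℝ) - 1 - 1 / ρ))) *
          ((k : ℝ) ^ (r - 1) * Real.log k)
            ^ (((r : ℝ) - 1 / ρ) / ((r : ℝ) - 1 - 1 / ρ)) := by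
  obtain rfl : (fun i => (H i).card) = e := funext hecard
  have hdensity : ∀ i, density r (v i) (H i).card = ρ ↔ (i : ℕ) < s := fun i =>
    ⟨fun h => not_le.1 fun hi => (hρlt i hi).ne' h, hρeq i⟩
  refine general_upper_bound_general hr hHr hρ
    (fun i => (lt_or_ge (i : ℕ) s).elim (fun hi => (hρeq i hi).ge) fun hi => (hρlt i hi).le)
    hα hc₁pos ?_ ?_
  · rwa [Finset.filter_congr fun i _ => hdensity i]
  · simpa only [hdensity] using hc₂
end

section
/- Fix 2 ≤ l < r. For all sufficiently large k, m_k(r,l) < c_{r,l} · (k^{r−1} log k)^{l/(l−1)}, where c_{r,l} = 2 · (100·((r)_l)^2/l!)^{1/(l−1)} · (10(r−1)/(l−1))^{l/(l−1)} and (r)_l = r(r−1)···(r−l+1) is the falling factorial. That is, there exists an (r,l)-system with chromatic number greater than k and fewer than c_{r,l} (k^{r−1} log k)^{l/(l−1)} edges. -/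
/-- An `(r,l)`-system: an `r`-uniform hypergraph in which every two distinct edges
share fewer than `l` vertices. -/
def IsRLSystem (r l : ℕ) {V : Type*} [DecidableEq V] (E : Finset (Finset V)) : Prop :=
  IsRGraph r E ∧ ∀ e ∈ E, ∀ f ∈ E, e ≠ f → (e ∩ f).card < l

/-!
Let `V` have `n = k s` vertices. Read a sequence of `m` random `r`-sets and keep a set whenever it
meets every set kept before in fewer than `l` vertices; the result is an `(r, l)`-system. If every
`s`-set contains an edge, then no `k`-coloring is proper, because some color class has at least `s`
vertices. An `s`-set `S` can miss out in two ways.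
* Few `l`-subsets of `S` are covered by edges. Then most `r`-subsets of `S` would be kept, so every
  step hits `S` with probability about `(s choose r) / (n choose r)`.
* Many `l`-subsets of `S` get covered. The exponential moment of their number makes this unlikely.

A union bound over the `s`-sets gives a good sequence, for `n` of order
`(k ^ (r - 1) log k) ^ (1 / (l - 1))` and `m` of order `n k ^ (r - 1) log k`. Instead of a
probability space, the proof uses conditional expectations: a potential that dominates the number of
bad `s`-sets and that does not increase on average over the next `r`-set.
-/

open Finset

section Greedy

variable {V : Type*} [DecidableEq V]

/-- The `l`-subsets of `S` covered by `E`, i.e. contained in some edge of `E`. -/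
def coveredSubsets (l : ℕ) (E : Finset (Finset V)) (S : Finset V) : Finset (Finset V) :=
  E.biUnion fun e => (e ∩ S).powersetCard l

/-- One step of the greedy process: the edge `e` is added to `E` if it meets every edge of `E` in
fewer than `l` vertices, and is discarded otherwise. -/
def greedyExtend (l : ℕ) (E : Finset (Finset V)) (e : Finset V) : Finset (Finset V) :=
  if ∀ f ∈ E, (e ∩ f).card < l then insert e E else E

/-- The outcome of the greedy process that reads the candidate edges in `es` in order. -/
def greedySystem (l : ℕ) (es : List (Finset V)) : Finset (Finset V) :=
  es.foldl (greedyExtend l) ∅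

theorem mem_coveredSubsets {l : ℕ} {E : Finset (Finset V)} {S L : Finset V} :
    L ∈ coveredSubsets l E S ↔ ∃ e ∈ E, L ⊆ e ∧ L ⊆ S ∧ L.card = l := by
  simp only [coveredSubsets, mem_biUnion, mem_powersetCard, subset_inter_iff, and_assoc]

theorem coveredSubsets_mono {l : ℕ} {E F : Finset (Finset V)} (h : E ⊆ F) (S : Finset V) :
    coveredSubsets l E S ⊆ coveredSubsets l F S :=
  biUnion_subset_biUnion_of_subset_left _ h

theorem subset_greedyExtend (l : ℕ) (E : Finset (Finset V)) (e : Finset V) :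
    E ⊆ greedyExtend l E e := by
  unfold greedyExtend
  split_ifs
  · exact subset_insert e E
  · exact Subset.rfl

theorem greedyExtend_subset_insert (l : ℕ) (E : Finset (Finset V)) (e : Finset V) :
    greedyExtend l E e ⊆ insert e E := by
  unfold greedyExtend
  split_ifs
  · exact Subset.rfl
  · exact subset_insert e E

theorem IsRLSystem.insert {r l : ℕ} {E : Finset (Finset V)} (hE : IsRLSystem r l E)
    {e : Finset V} (he : e.card = r) (hl : ∀ f ∈ E, (e ∩ f).card < l) :
    IsRLSystem r l (insert e E) := by
  refine ⟨forall_mem_insert _ _ _ |>.2 ⟨he, hE.1⟩, forall_mem_insert _ _ _ |>.2 ⟨?_, ?_⟩⟩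
  · intro f hf hef
    exact hl f (mem_of_mem_insert_of_ne hf hef.symm)
  · refine fun f hf => forall_mem_insert _ _ _ |>.2 ⟨fun _ => ?_, hE.2 f hf⟩
    exact inter_comm e f ▸ hl f hf

theorem IsRLSystem.greedyExtend {r l : ℕ} {E : Finset (Finset V)} (hE : IsRLSystem r l E)
    {e : Finset V} (he : e.card = r) : IsRLSystem r l (greedyExtend l E e) := by
  unfold _root_.greedyExtend
  split_ifs with hl
  · exact hE.insert he hl
  · exact hE

theorem isRLSystem_greedySystem {r : ℕ} (l : ℕ) {es : List (Finset V)}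
    (hes : ∀ e ∈ es, e.card = r) : IsRLSystem r l (greedySystem l es) :=
  List.foldlRecOn es (greedyExtend l) ⟨by simp [IsRGraph], by simp⟩
    fun _ hE e he => hE.greedyExtend (hes e he)

theorem card_greedySystem_le_length (l : ℕ) (es : List (Finset V)) :
    (greedySystem l es).card ≤ es.length := by
  induction es using List.reverseRecOn with
  | nil => simp [greedySystem]
  | append_singleton es e ih =>
    rw [greedySystem, List.foldl_append, List.length_append]
    exact (card_le_card (greedyExtend_subset_insert l _ e)).trans
      ((card_insert_le e _).trans (Nat.add_le_add_right ih 1))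

theorem card_coveredSubsets_greedyExtend_le (l : ℕ) (E : Finset (Finset V)) (e S : Finset V) :
    (coveredSubsets l (greedyExtend l E e) S).card ≤
      (coveredSubsets l E S).card + (e ∩ S).card.choose l :=
  calc (coveredSubsets l (greedyExtend l E e) S).card
      ≤ (coveredSubsets l (insert e E) S).card :=
        card_le_card (coveredSubsets_mono (greedyExtend_subset_insert l E e) S)
    _ ≤ (coveredSubsets l E S).card + ((e ∩ S).powersetCard l).card := by
        rw [coveredSubsets, biUnion_insert, add_comm]
        exact card_union_le _ _
    _ = (coveredSubsets l E S).card + (e ∩ S).card.choose l := by rw [card_powersetCard]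

theorem mem_greedyExtend_of_forall_not_subset {l : ℕ} {E : Finset (Finset V)} {e S : Finset V}
    (heS : e ⊆ S) (h : ∀ L ∈ coveredSubsets l E S, ¬ L ⊆ e) : e ∈ greedyExtend l E e := by
  have hcompat : ∀ f ∈ E, (e ∩ f).card < l := by
    intro f hf
    by_contra! hle
    obtain ⟨L, hL, hLcard⟩ := exists_subset_card_eq hle
    have hLe : L ⊆ e := hL.trans inter_subset_left
    exact h L (mem_coveredSubsets.2 ⟨f, hf, hL.trans inter_subset_right, hLe.trans heS, hLcard⟩) hLe
  rw [greedyExtend, if_pos hcompat]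
  exact mem_insert_self e E

variable [Fintype V]

theorem card_filter_forall_not_subset_add_choose_le {r l : ℕ} (hlr : l ≤ r)
    (E : Finset (Finset V)) (S : Finset V) :
    {e ∈ (univ : Finset V).powersetCard r | ∀ f ∈ greedyExtend l E e, ¬ f ⊆ S}.card +
        S.card.choose r ≤
      (Fintype.card V).choose r +
        (coveredSubsets l E S).card * (S.card - l).choose (r - l) := by
  have hSV : S.powersetCard r ⊆ (univ : Finset V).powersetCard r :=
    powersetCard_mono (subset_univ S)
  have hmiss : {e ∈ (univ : Finset V).powersetCard r | ∀ f ∈ greedyExtend l E e, ¬ f ⊆ S} ⊆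
      ((univ : Finset V).powersetCard r \ S.powersetCard r) ∪
        (coveredSubsets l E S).biUnion fun L => {e ∈ S.powersetCard r | L ⊆ e} := by
    intro e he
    obtain ⟨heV, hmiss⟩ := mem_filter.1 he
    by_cases heS : e ∈ S.powersetCard r
    · have heS' := (mem_powersetCard.1 heS).1
      obtain ⟨L, hL, hLe⟩ : ∃ L ∈ coveredSubsets l E S, L ⊆ e := by
        by_contra! h
        exact hmiss e (mem_greedyExtend_of_forall_not_subset heS' h) heS'
      exact mem_union_right _ (mem_biUnion.2 ⟨L, hL, mem_filter.2 ⟨heS, hLe⟩⟩)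
    · exact mem_union_left _ (mem_sdiff.2 ⟨heV, heS⟩)
  have hcovered : ((coveredSubsets l E S).biUnion fun L => {e ∈ S.powersetCard r | L ⊆ e}).card ≤
      (coveredSubsets l E S).card * (S.card - l).choose (r - l) := by
    refine card_biUnion_le_card_mul _ _ _ fun L hL => ?_
    obtain ⟨-, -, -, hLS, rfl⟩ := mem_coveredSubsets.1 hL
    exact (card_filter_powersetCard_subset L S r hLS hlr).le
  have hsdiff := card_sdiff_add_card_eq_card hSV
  rw [card_powersetCard, card_powersetCard, card_univ] at hsdiff
  have := (card_le_card hmiss).trans (card_union_le _ _)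
  omega

theorem sum_choose_card_inter {r l : ℕ} (hlr : l ≤ r) (S : Finset V) :
    ∑ e ∈ (univ : Finset V).powersetCard r, (e ∩ S).card.choose l =
      S.card.choose l * (Fintype.card V - l).choose (r - l) := by
  have hchoose (e : Finset V) :
      (e ∩ S).card.choose l = (bipartiteAbove (fun e L => L ⊆ e) (S.powersetCard l) e).card := by
    rw [← card_powersetCard]
    congr 1
    ext L
    simp only [bipartiteAbove, mem_filter, mem_powersetCard, subset_inter_iff]
    tauto
  simp only [hchoose, sum_card_bipartiteAbove_eq_sum_card_bipartiteBelow, bipartiteBelow]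
  rw [← card_powersetCard, ← smul_eq_mul]
  refine sum_eq_card_nsmul fun L hL => ?_
  obtain rfl := (mem_powersetCard.1 hL).2
  exact card_filter_powersetCard_subset L univ r (subset_univ L) hlr

theorem sum_choose_card_inter_div_choose {r l : ℕ} (hlr : l ≤ r) (hrV : r ≤ Fintype.card V)
    (S : Finset V) :
    ∑ e ∈ (univ : Finset V).powersetCard r, ((e ∩ S).card.choose l / r.choose l : ℝ) =
      (Fintype.card V).choose r * (S.card.choose l / (Fintype.card V).choose l) := by
  have hr : (0 : ℝ) < r.choose l := by exact_mod_cast Nat.choose_pos hlr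
  have hV : (0 : ℝ) < (Fintype.card V).choose l := by exact_mod_cast Nat.choose_pos (hlr.trans hrV)
  have hmul : ((Fintype.card V).choose r * r.choose l : ℝ) =
      (Fintype.card V).choose l * (Fintype.card V - l).choose (r - l) := by
    exact_mod_cast Nat.choose_mul hlr
  have hsum : (∑ e ∈ (univ : Finset V).powersetCard r, ((e ∩ S).card.choose l : ℝ)) =
      S.card.choose l * (Fintype.card V - l).choose (r - l) := by
    exact_mod_cast sum_choose_card_inter hlr S
  rw [← sum_div, hsum]
  field_simp
  linear_combination -(S.card.choose l : ℝ) * hmul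

end Greedy

section Potential

theorem exists_foldl_le_of_sum_le {σ ι : Type*} {A : Finset ι} (hA : A.Nonempty)
    (step : σ → ι → σ) (Φ : ℕ → σ → ℝ)
    (hΦ : ∀ j x, ∑ a ∈ A, Φ j (step x a) ≤ A.card * Φ (j + 1) x) (m : ℕ) (x : σ) :
    ∃ as : List ι, as.length = m ∧ (∀ a ∈ as, a ∈ A) ∧ Φ 0 (as.foldl step x) ≤ Φ m x := by
  induction m generalizing x with
  | zero => exact ⟨[], rfl, by simp, le_rfl⟩
  | succ m ih =>
    obtain ⟨a, ha, hle⟩ : ∃ a ∈ A, Φ m (step x a) ≤ Φ (m + 1) x :=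
      exists_le_of_sum_le hA (by simpa only [sum_const, nsmul_eq_mul] using hΦ m x)
    obtain ⟨as, hlen, has, hfold⟩ := ih (step x a)
    exact ⟨a :: as, by rw [List.length_cons, hlen], List.forall_mem_cons.2 ⟨ha, has⟩,
      hfold.trans hle⟩

theorem exp_le_one_add_two_mul {x : ℝ} (h0 : 0 ≤ x) (h1 : x ≤ 1) : Real.exp x ≤ 1 + 2 * x := by
  have h := (le_abs_self _).trans (Real.abs_exp_sub_one_le (abs_le.2 ⟨by linarith, h1⟩))
  rw [abs_of_nonneg h0] at h
  linarith

variable {V : Type*} [DecidableEq V] [Fintype V]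

/-- A bound for the conditional probability that, after `j` further greedy steps from `E`, the set
`S` still contains no edge while at most `τ (S.card choose l) / (r choose l)` of its `l`-subsets are
covered. -/
noncomputable def missPotential (r l : ℕ) (τ : ℝ) (j : ℕ) (E : Finset (Finset V)) (S : Finset V) :
    ℝ :=
  if (∀ e ∈ E, ¬ e ⊆ S) ∧
      ((coveredSubsets l E S).card * r.choose l : ℝ) ≤ τ * S.card.choose l then
    Real.exp (-(j * ((1 - τ) * (S.card.choose r / (Fintype.card V).choose r))))
  else 0

/-- A bound for the conditional probability that, after `j` further greedy steps from `E`, more than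
`τ (S.card choose l) / (r choose l)` of the `l`-subsets of `S` are covered. It is the exponential
moment of the number of covered `l`-subsets in units of `r choose l`, the most that one edge can
cover. -/
noncomputable def overloadPotential (r l : ℕ) (τ : ℝ) (j : ℕ) (E : Finset (Finset V))
    (S : Finset V) : ℝ :=
  Real.exp ((coveredSubsets l E S).card / r.choose l +
    (j * (2 * (S.card.choose l / (Fintype.card V).choose l)) -
      τ * S.card.choose l / (r.choose l : ℝ) ^ 2))

theorem missPotential_nonneg (r l : ℕ) (τ : ℝ) (j : ℕ) (E : Finset (Finset V)) (S : Finset V) :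
    0 ≤ missPotential r l τ j E S := by
  unfold missPotential
  split_ifs <;> positivity

theorem missPotential_le_exp (r l : ℕ) (τ : ℝ) (j : ℕ) (E : Finset (Finset V)) (S : Finset V) :
    missPotential r l τ j E S ≤
      Real.exp (-(j * ((1 - τ) * (S.card.choose r / (Fintype.card V).choose r)))) := by
  unfold missPotential
  split_ifs
  · exact le_rfl
  · positivity

theorem overloadPotential_nonneg (r l : ℕ) (τ : ℝ) (j : ℕ) (E : Finset (Finset V))
    (S : Finset V) : 0 ≤ overloadPotential r l τ j E S :=
  (Real.exp_pos _).le

theorem one_le_missPotential_add_overloadPotential {r l : ℕ} (hlr : l ≤ r) (τ : ℝ)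
    {E : Finset (Finset V)} {S : Finset V} (hS : ∀ e ∈ E, ¬ e ⊆ S) :
    1 ≤ missPotential r l τ 0 E S + overloadPotential r l τ 0 E S := by
  have hr : (0 : ℝ) < r.choose l := by exact_mod_cast Nat.choose_pos hlr
  by_cases hcov : ((coveredSubsets l E S).card * r.choose l : ℝ) ≤ τ * S.card.choose l
  · rw [missPotential, if_pos ⟨hS, hcov⟩, Nat.cast_zero, zero_mul, neg_zero, Real.exp_zero]
    exact le_add_of_nonneg_right (overloadPotential_nonneg r l τ 0 E S)
  · have hload : τ * S.card.choose l / (r.choose l : ℝ) ^ 2 ≤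
        (coveredSubsets l E S).card / r.choose l := by
      rw [div_le_div_iff₀ (by positivity) hr, sq, ← mul_assoc]
      exact mul_le_mul_of_nonneg_right (not_le.1 hcov).le hr.le
    refine le_add_of_nonneg_of_le (missPotential_nonneg r l τ 0 E S) (Real.one_le_exp ?_)
    rw [Nat.cast_zero, zero_mul]
    linarith

theorem card_filter_forall_not_subset_le {r l : ℕ} {τ : ℝ} (hlr : l ≤ r)
    (hrV : r ≤ Fintype.card V) {E : Finset (Finset V)} {S : Finset V}
    (hcov : ((coveredSubsets l E S).card * r.choose l : ℝ) ≤ τ * S.card.choose l) :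
    ({e ∈ (univ : Finset V).powersetCard r | ∀ f ∈ greedyExtend l E e, ¬ f ⊆ S}.card : ℝ) ≤
      (Fintype.card V).choose r *
        (1 - (1 - τ) * (S.card.choose r / (Fintype.card V).choose r)) := by
  have hr : (0 : ℝ) < r.choose l := by exact_mod_cast Nat.choose_pos hlr
  have hV : (0 : ℝ) < (Fintype.card V).choose r := by exact_mod_cast Nat.choose_pos hrV
  have hcount : ({e ∈ (univ : Finset V).powersetCard r |
      ∀ f ∈ greedyExtend l E e, ¬ f ⊆ S}.card : ℝ) + S.card.choose r ≤
        (Fintype.card V).choose r + (coveredSubsets l E S).card * (S.card - l).choose (r - l) := by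
    exact_mod_cast card_filter_forall_not_subset_add_choose_le hlr E S
  have hmul : (S.card.choose r * r.choose l : ℝ) =
      S.card.choose l * (S.card - l).choose (r - l) := by
    exact_mod_cast Nat.choose_mul hlr
  have hblocked : ((coveredSubsets l E S).card * (S.card - l).choose (r - l) : ℝ) ≤
      τ * S.card.choose r := by
    refine le_of_mul_le_mul_right ?_ hr
    calc ((coveredSubsets l E S).card * (S.card - l).choose (r - l) : ℝ) * r.choose l
        = (coveredSubsets l E S).card * r.choose l * (S.card - l).choose (r - l) := by ring
      _ ≤ τ * S.card.choose l * (S.card - l).choose (r - l) := by gcongr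
      _ = τ * S.card.choose r * r.choose l := by rw [mul_assoc, ← hmul, mul_assoc]
  calc _ ≤ (Fintype.card V).choose r - (1 - τ) * S.card.choose r := by linarith
    _ = _ := by field_simp

theorem sum_missPotential_greedyExtend_le {r l : ℕ} (hlr : l ≤ r) (hrV : r ≤ Fintype.card V)
    (τ : ℝ) (j : ℕ) (E : Finset (Finset V)) (S : Finset V) :
    ∑ e ∈ (univ : Finset V).powersetCard r, missPotential r l τ j (greedyExtend l E e) S ≤
      (Fintype.card V).choose r * missPotential r l τ (j + 1) E S := by
  set p : ℝ := (1 - τ) * (S.card.choose r / (Fintype.card V).choose r)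
  by_cases h : (∀ e ∈ E, ¬ e ⊆ S) ∧
      ((coveredSubsets l E S).card * r.choose l : ℝ) ≤ τ * S.card.choose l
  · calc ∑ e ∈ (univ : Finset V).powersetCard r, missPotential r l τ j (greedyExtend l E e) S
        ≤ ∑ e ∈ (univ : Finset V).powersetCard r,
            if ∀ f ∈ greedyExtend l E e, ¬ f ⊆ S then Real.exp (-(j * p)) else 0 := by
          refine sum_le_sum fun e _ => ?_
          split_ifs with hmiss
          · exact missPotential_le_exp r l τ j _ S
          · exact (if_neg fun h' => hmiss h'.1).le
      _ = ({e ∈ (univ : Finset V).powersetCard r |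
            ∀ f ∈ greedyExtend l E e, ¬ f ⊆ S}.card : ℝ) * Real.exp (-(j * p)) := by
          rw [← sum_filter, sum_const, nsmul_eq_mul]
      _ ≤ (Fintype.card V).choose r * (1 - p) * Real.exp (-(j * p)) := by
          gcongr
          exact card_filter_forall_not_subset_le hlr hrV h.2
      _ ≤ (Fintype.card V).choose r * Real.exp (-p) * Real.exp (-(j * p)) := by
          gcongr
          exact Real.one_sub_le_exp_neg p
      _ = (Fintype.card V).choose r * missPotential r l τ (j + 1) E S := by
          have hexp : -p + -(j * p) = -(((j + 1 : ℕ) : ℝ) * p) := by push_cast; ring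
          rw [missPotential, if_pos h, mul_assoc, ← Real.exp_add, hexp]
  · rw [missPotential, if_neg h, mul_zero]
    refine (sum_eq_zero fun e _ => if_neg fun h' => h ⟨?_, le_trans ?_ h'.2⟩).le
    · exact fun f hf => h'.1 f (subset_greedyExtend l E e hf)
    · gcongr
      exact coveredSubsets_mono (subset_greedyExtend l E e) S

theorem sum_exp_choose_card_inter_le {r l : ℕ} (hlr : l ≤ r) (hrV : r ≤ Fintype.card V)
    (S : Finset V) :
    ∑ e ∈ (univ : Finset V).powersetCard r,
        Real.exp ((e ∩ S).card.choose l / r.choose l) ≤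
      (Fintype.card V).choose r *
        Real.exp (2 * (S.card.choose l / (Fintype.card V).choose l)) := by
  have hr : (0 : ℝ) < r.choose l := by exact_mod_cast Nat.choose_pos hlr
  calc ∑ e ∈ (univ : Finset V).powersetCard r, Real.exp ((e ∩ S).card.choose l / r.choose l)
      ≤ ∑ e ∈ (univ : Finset V).powersetCard r,
          (1 + 2 * ((e ∩ S).card.choose l / r.choose l : ℝ)) := by
        refine sum_le_sum fun e he => exp_le_one_add_two_mul (by positivity) ((div_le_one hr).2 ?_)
        rw [← (mem_powersetCard.1 he).2]
        exact_mod_cast Nat.choose_le_choose l (card_le_card inter_subset_left)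
    _ = (Fintype.card V).choose r * (2 * (S.card.choose l / (Fintype.card V).choose l) + 1) := by
        rw [sum_add_distrib, ← mul_sum, sum_choose_card_inter_div_choose hlr hrV, sum_const,
          card_powersetCard, card_univ, nsmul_eq_mul]
        ring
    _ ≤ _ := by
        gcongr
        exact Real.add_one_le_exp _

theorem sum_overloadPotential_greedyExtend_le {r l : ℕ} (hlr : l ≤ r) (hrV : r ≤ Fintype.card V)
    (τ : ℝ) (j : ℕ) (E : Finset (Finset V)) (S : Finset V) :
    ∑ e ∈ (univ : Finset V).powersetCard r, overloadPotential r l τ j (greedyExtend l E e) S ≤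
      (Fintype.card V).choose r * overloadPotential r l τ (j + 1) E S := by
  have hstep (e : Finset V) : overloadPotential r l τ j (greedyExtend l E e) S ≤
      overloadPotential r l τ j E S * Real.exp ((e ∩ S).card.choose l / r.choose l) := by
    have hcov : ((coveredSubsets l (greedyExtend l E e) S).card : ℝ) ≤
        (coveredSubsets l E S).card + (e ∩ S).card.choose l := by
      exact_mod_cast card_coveredSubsets_greedyExtend_le l E e S
    rw [overloadPotential, overloadPotential, ← Real.exp_add, add_right_comm, ← add_div]
    gcongr
  calc ∑ e ∈ (univ : Finset V).powersetCard r, overloadPotential r l τ j (greedyExtend l E e) S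
      ≤ overloadPotential r l τ j E S *
          ∑ e ∈ (univ : Finset V).powersetCard r,
            Real.exp ((e ∩ S).card.choose l / r.choose l) := by
        rw [mul_sum]
        exact sum_le_sum fun e _ => hstep e
    _ ≤ overloadPotential r l τ j E S * ((Fintype.card V).choose r *
          Real.exp (2 * (S.card.choose l / (Fintype.card V).choose l))) :=
        mul_le_mul_of_nonneg_left (sum_exp_choose_card_inter_le hlr hrV S)
          (overloadPotential_nonneg r l τ j E S)
    _ = (Fintype.card V).choose r * overloadPotential r l τ (j + 1) E S := by
        rw [mul_left_comm, overloadPotential, overloadPotential, ← Real.exp_add]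
        push_cast
        ring_nf

theorem exists_isRLSystem_forall_exists_subset {r l s m : ℕ} {τ : ℝ} (hlr : l ≤ r)
    (hrV : r ≤ Fintype.card V)
    (h : (Fintype.card V).choose s *
      (Real.exp (-(m * ((1 - τ) * (s.choose r / (Fintype.card V).choose r)))) +
        Real.exp (m * (2 * (s.choose l / (Fintype.card V).choose l)) -
          τ * s.choose l / (r.choose l : ℝ) ^ 2)) < 1) :
    ∃ E : Finset (Finset V), IsRLSystem r l E ∧ E.card ≤ m ∧
      ∀ S : Finset V, S.card = s → ∃ e ∈ E, e ⊆ S := by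
  let Φ (j : ℕ) (E : Finset (Finset V)) : ℝ := ∑ S ∈ (univ : Finset V).powersetCard s,
    (missPotential r l τ j E S + overloadPotential r l τ j E S)
  have hinit : Φ m ∅ < 1 := by
    refine lt_of_le_of_lt ?_ h
    rw [← card_univ, ← card_powersetCard, ← nsmul_eq_mul, card_univ]
    refine sum_le_card_nsmul _ _ _ fun S hS => ?_
    obtain rfl := (mem_powersetCard.1 hS).2
    refine add_le_add (missPotential_le_exp r l τ m ∅ S) (le_of_eq ?_)
    simp only [overloadPotential, coveredSubsets, biUnion_empty, card_empty, Nat.cast_zero,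
      zero_div, zero_add]
  have hstep (j : ℕ) (E : Finset (Finset V)) :
      ∑ e ∈ (univ : Finset V).powersetCard r, Φ j (greedyExtend l E e) ≤
        ((univ : Finset V).powersetCard r).card * Φ (j + 1) E := by
    rw [sum_comm, mul_sum, card_powersetCard, card_univ]
    refine sum_le_sum fun S _ => ?_
    rw [sum_add_distrib, mul_add]
    exact add_le_add (sum_missPotential_greedyExtend_le hlr hrV τ j E S)
      (sum_overloadPotential_greedyExtend_le hlr hrV τ j E S)
  obtain ⟨es, hlen, hes, hle⟩ :=
    exists_foldl_le_of_sum_le (powersetCard_nonempty.2 hrV) (greedyExtend l) Φ hstep m ∅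
  have hcard : ∀ e ∈ es, e.card = r := fun e he => (mem_powersetCard.1 (hes e he)).2
  refine ⟨greedySystem l es, isRLSystem_greedySystem l hcard,
    (card_greedySystem_le_length l es).trans hlen.le, fun S hS => ?_⟩
  by_contra! hmiss
  have hS_le : missPotential r l τ 0 (greedySystem l es) S +
      overloadPotential r l τ 0 (greedySystem l es) S ≤ Φ 0 (greedySystem l es) :=
    single_le_sum (f := fun S => missPotential r l τ 0 (greedySystem l es) S +
        overloadPotential r l τ 0 (greedySystem l es) S)
      (fun S _ => add_nonneg (missPotential_nonneg ..) (overloadPotential_nonneg ..))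
      (mem_powersetCard.2 ⟨subset_univ S, hS⟩)
  exact ((one_le_missPotential_add_overloadPotential hlr τ hmiss).trans (hS_le.trans hle)).not_gt
    hinit

end Potential

section Estimates

theorem mul_pow_le_mul_descFactorial_add (n j : ℕ) :
    n * n ^ j ≤ n * n.descFactorial j + j.choose 2 * n ^ j := by
  induction j with
  | zero => simp
  | succ j ih =>
    have hsucc : n * n.descFactorial j ≤ n.descFactorial (j + 1) + j * n ^ j :=
      calc n * n.descFactorial j ≤ ((n - j) + j) * n.descFactorial j := by gcongr; omega
        _ = n.descFactorial (j + 1) + j * n.descFactorial j := by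
          rw [add_mul, Nat.descFactorial_succ]
        _ ≤ n.descFactorial (j + 1) + j * n ^ j := by gcongr; exact n.descFactorial_le_pow j
    have hchoose : (j + 1).choose 2 = j + j.choose 2 := by
      rw [Nat.choose_succ_succ' j 1, Nat.choose_one_right]
    calc n * n ^ (j + 1) = n * (n * n ^ j) := by ring
      _ ≤ n * (n * n.descFactorial j + j.choose 2 * n ^ j) := by gcongr
      _ = n * (n * n.descFactorial j) + j.choose 2 * n ^ (j + 1) := by ring
      _ ≤ n * (n.descFactorial (j + 1) + j * n ^ j) + j.choose 2 * n ^ (j + 1) := by gcongr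
      _ = n * n.descFactorial (j + 1) + (j + 1).choose 2 * n ^ (j + 1) := by rw [hchoose]; ring

theorem pow_le_two_mul_descFactorial {n j : ℕ} (h : j ^ 2 ≤ n) :
    n ^ j ≤ 2 * n.descFactorial j := by
  rcases Nat.eq_zero_or_pos n with rfl | hn
  · obtain rfl : j = 0 := by simpa using h
    simp
  have hj : 2 * j.choose 2 ≤ n := by
    rw [Nat.choose_two_right]
    exact (Nat.mul_div_le _ 2).trans ((Nat.mul_le_mul_left j (Nat.sub_le j 1)).trans (sq j ▸ h))
  have := mul_pow_le_mul_descFactorial_add n j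
  have := Nat.mul_le_mul_right (n ^ j) hj
  refine Nat.le_of_mul_le_mul_left ?_ hn
  linarith

theorem choose_mul_le_two_mul_pow_mul_choose (k : ℕ) {s j : ℕ} (h : j ^ 2 ≤ s) :
    (k * s).choose j ≤ 2 * k ^ j * s.choose j := by
  refine Nat.le_of_mul_le_mul_left ?_ j.factorial_pos
  calc j.factorial * (k * s).choose j = (k * s).descFactorial j :=
        (Nat.descFactorial_eq_factorial_mul_choose _ _).symm
    _ ≤ k ^ j * s ^ j := (Nat.descFactorial_le_pow _ _).trans_eq (mul_pow k s j)
    _ ≤ k ^ j * (2 * s.descFactorial j) := by gcongr; exact pow_le_two_mul_descFactorial h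
    _ = j.factorial * (2 * k ^ j * s.choose j) := by
        rw [Nat.descFactorial_eq_factorial_mul_choose]; ring

theorem one_div_le_choose_div_choose_mul {k s j : ℕ} (hk : 0 < k) (h : j ^ 2 ≤ s) :
    1 / (2 * (k : ℝ) ^ j) ≤ s.choose j / (k * s).choose j := by
  have hjs : j ≤ k * s :=
    (Nat.le_self_pow two_ne_zero j).trans (h.trans (Nat.le_mul_of_pos_left s hk))
  rw [div_le_div_iff₀ (by positivity) (by exact_mod_cast Nat.choose_pos hjs), one_mul]
  exact_mod_cast (choose_mul_le_two_mul_pow_mul_choose k h).trans_eq (mul_comm _ _)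

theorem choose_mul_le_exp {k : ℕ} (hk : 0 < k) (s : ℕ) :
    ((k * s).choose s : ℝ) ≤ Real.exp (s * Real.log k + s) :=
  calc ((k * s).choose s : ℝ) ≤ ((k * s : ℕ) : ℝ) ^ s / s.factorial := Nat.choose_le_pow_div s _
    _ = (k : ℝ) ^ s * ((s : ℝ) ^ s / s.factorial) := by push_cast; ring
    _ ≤ Real.exp (s * Real.log k) * Real.exp s := by
      gcongr
      · rw [Real.exp_nat_mul, Real.exp_log (by exact_mod_cast hk)]
      · exact Real.pow_div_factorial_le_exp s (Nat.cast_nonneg s) s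
    _ = Real.exp (s * Real.log k + s) := (Real.exp_add _ _).symm

theorem mul_choose_sq_le_two_mul_choose {n r l : ℕ} {m : ℝ} (hln : l ^ 2 ≤ n)
    (h : (r.descFactorial l : ℝ) ^ 2 / l.factorial * m ≤ (n : ℝ) ^ l) :
    (r.choose l : ℝ) ^ 2 * m ≤ 2 * n.choose l := by
  have hfac : (0 : ℝ) < l.factorial := by positivity
  have hpow : (n : ℝ) ^ l ≤ 2 * (l.factorial * n.choose l) := by
    rw [← Nat.cast_mul, ← Nat.descFactorial_eq_factorial_mul_choose]
    exact_mod_cast pow_le_two_mul_descFactorial hln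
  refine le_of_mul_le_mul_left ?_ hfac
  calc (l.factorial : ℝ) * ((r.choose l : ℝ) ^ 2 * m)
      = (r.descFactorial l : ℝ) ^ 2 / l.factorial * m := by
        rw [Nat.descFactorial_eq_factorial_mul_choose, Nat.cast_mul]
        field_simp
    _ ≤ (l.factorial : ℝ) * (2 * n.choose l) := by linarith

theorem mul_add_lt_one_of_le_exp {c x y u : ℝ} (hcu : c ≤ Real.exp u)
    (hx : x ≤ -(u + 1)) (hy : y ≤ -(u + 1)) : c * (Real.exp x + Real.exp y) < 1 :=
  calc c * (Real.exp x + Real.exp y)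
      ≤ Real.exp u * (Real.exp (-(u + 1)) + Real.exp (-(u + 1))) := by gcongr
    _ = 2 * Real.exp (-1) := by
      rw [← two_mul, mul_left_comm, ← Real.exp_add]
      ring_nf
    _ < 1 := by linarith [Real.exp_neg_one_lt_half]

end Estimates

theorem not_hypColorable_of_forall_exists_subset {V : Type*} [Fintype V] {r s k : ℕ} (hr : 2 ≤ r)
    (hk : 0 < k) {E : Finset (Finset V)} (hE : IsRGraph r E) (hks : k * s ≤ Fintype.card V)
    (h : ∀ S : Finset V, S.card = s → ∃ e ∈ E, e ⊆ S) : ¬ HypColorable E k := by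
  rintro ⟨f, hf⟩
  have : Nonempty (Fin k) := ⟨⟨0, hk⟩⟩
  obtain ⟨c, hc⟩ := Fintype.exists_le_card_fiber_of_mul_le_card f (n := s) (by simpa using hks)
  obtain ⟨S, hSc, hS⟩ := exists_subset_card_eq hc
  obtain ⟨e, he, heS⟩ := h S hS
  obtain ⟨u, hu, v, hv, huv⟩ := hf e he (hr.trans (hE e he).ge)
  have hcolor : ∀ w ∈ e, f w = c := fun w hw => (mem_filter.1 (hSc (heS hw))).2
  exact huv ((hcolor u hu).trans (hcolor v hv).symm)

theorem exists_isRLSystem_not_hypColorable {r l k s m : ℕ} (hr : 2 ≤ r) (hlr : l ≤ r)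
    (hk : 1 ≤ Real.log k) (hs : r ^ 2 ≤ s) (hm : 9 * (s * Real.log k) * (k : ℝ) ^ r ≤ m)
    (hm' : 100 * (r.descFactorial l : ℝ) ^ 2 / l.factorial * m ≤ ((k * s : ℕ) : ℝ) ^ l) :
    ∃ E : Finset (Finset (Fin (k * s))), IsRLSystem r l E ∧ ¬ HypColorable E k ∧ E.card ≤ m := by
  have hk0 : 0 < k := Nat.pos_of_ne_zero (by rintro rfl; norm_num at hk)
  have hk1 : (1 : ℝ) ≤ k := by exact_mod_cast hk0
  have hrs : r ≤ s := (Nat.le_self_pow two_ne_zero r).trans hs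
  have hs1 : (1 : ℝ) ≤ s := by exact_mod_cast (by omega : 1 ≤ s)
  have hsn : s ≤ k * s := Nat.le_mul_of_pos_left s hk0
  have hls : l ^ 2 ≤ s := le_trans (by gcongr) hs
  have hsk : (s : ℝ) ≤ s * Real.log k := le_mul_of_one_le_right (by linarith) hk
  have hmk : 9 * (s * Real.log k) ≤ m / (k : ℝ) ^ r := (le_div_iff₀ (by positivity)).2 hm
  have hratio {j : ℕ} (hj : j ≤ r) :
      (m / (k : ℝ) ^ r) / 2 ≤ m * (s.choose j / (k * s).choose j) :=
    calc (m / (k : ℝ) ^ r) / 2 = m * (1 / (2 * (k : ℝ) ^ r)) := by field_simp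
      _ ≤ m * (1 / (2 * (k : ℝ) ^ j)) := by gcongr
      _ ≤ _ := mul_le_mul_of_nonneg_left
        (one_div_le_choose_div_choose_mul hk0 (le_trans (by gcongr) hs)) (Nat.cast_nonneg m)
  have hload : 10 * (m * (s.choose l / (k * s).choose l : ℝ)) ≤
      1 / 5 * s.choose l / (r.choose l : ℝ) ^ 2 := by
    have hC : (0 : ℝ) < r.choose l := by exact_mod_cast Nat.choose_pos hlr
    have hn : (0 : ℝ) < (k * s).choose l := by
      exact_mod_cast Nat.choose_pos (hlr.trans (hrs.trans hsn))
    have hbudget := mul_choose_sq_le_two_mul_choose (m := 100 * m) (r := r) (hls.trans hsn)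
      (le_trans (le_of_eq (by ring)) hm')
    rw [le_div_iff₀ (by positivity)]
    calc _ = (r.choose l : ℝ) ^ 2 * (100 * m) * (s.choose l / (k * s).choose l) / 10 := by ring
      _ ≤ 2 * (k * s).choose l * (s.choose l / (k * s).choose l) / 10 := by gcongr
      _ = _ := by field_simp; ring
  obtain ⟨E, hE, hcard, hES⟩ := exists_isRLSystem_forall_exists_subset (V := Fin (k * s))
    (s := s) (m := m) (τ := 1 / 5) hlr (by simpa using hrs.trans hsn) (by
      rw [Fintype.card_fin]
      refine mul_add_lt_one_of_le_exp (choose_mul_le_exp hk0 s) ?_ ?_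
      · linarith [hratio le_rfl]
      · linarith [hratio hlr])
  exact ⟨E, hE, not_hypColorable_of_forall_exists_subset hr hk0 hE.1 (by simp) hES, hcard⟩

theorem rpow_one_div_mul_self {a x β : ℝ} (ha : 0 ≤ a) (hx : 0 < x) (hβ : 1 < β) :
    (a * x) ^ (1 / (β - 1)) * x = a ^ (1 / (β - 1)) * x ^ (β / (β - 1)) := by
  have hexp : β / (β - 1) = 1 / (β - 1) + 1 := by
    field_simp [(sub_pos.2 hβ).ne']
    ring
  rw [hexp, Real.rpow_add_one hx.ne', Real.mul_rpow ha hx.le, mul_assoc]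

theorem exists_nat_mul_mem_Ico {k M : ℕ} {y : ℝ} (hk : 0 < k) (hM : 1 ≤ M) (h : M * k ≤ y) :
    ∃ s : ℕ, M ≤ s ∧ ((k * s : ℕ) : ℝ) ∈ Set.Ico y (2 * y) := by
  have hk' : (0 : ℝ) < k := by exact_mod_cast hk
  have hMs : (M : ℝ) ≤ y / k := (le_div_iff₀ hk').2 h
  have hyk : 1 ≤ y / k := le_trans (by exact_mod_cast hM) hMs
  refine ⟨⌈y / k⌉₊, by exact_mod_cast hMs.trans (Nat.le_ceil _), ?_, ?_⟩ <;> push_cast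
  · exact (div_le_iff₀' hk').1 (Nat.le_ceil _)
  · rw [← lt_div_iff₀' hk', mul_div_assoc]
    linarith [Nat.ceil_lt_add_one (zero_le_one.trans hyk)]

theorem nine_mul_le_floor_mul {D z : ℝ} (hD : 10 ≤ D) (hz : 1 ≤ z) : 9 * z ≤ ⌊D * z⌋₊ := by
  have := Nat.lt_floor_add_one (D * z)
  nlinarith

theorem exists_vertex_edge_counts {l k M : ℕ} {A D K : ℝ} (hl : 2 ≤ l) (hk : 0 < k) (hM : 1 ≤ M)
    (hA : 0 ≤ A) (hD : 10 ≤ D) (hK : 1 ≤ K) (hMk : (M * k : ℝ) ^ (l - 1) ≤ A * (D * K)) :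
    ∃ s m : ℕ, M ≤ s ∧ 9 * ((k * s : ℕ) * K) ≤ m ∧ A * m ≤ ((k * s : ℕ) : ℝ) ^ l ∧
      (m : ℝ) < 2 * (A ^ (1 / ((l : ℝ) - 1)) * (D * K) ^ ((l : ℝ) / ((l : ℝ) - 1))) := by
  have hl' : (1 : ℝ) < l := by exact_mod_cast hl
  have hDK : 0 < D * K := by positivity
  set y : ℝ := (A * (D * K)) ^ (1 / ((l : ℝ) - 1)) with hy
  have hy0 : 0 ≤ y := by positivity
  have hypow : y ^ (l - 1) = A * (D * K) := by
    have hcast : (l : ℝ) - 1 = ((l - 1 : ℕ) : ℝ) := by rw [Nat.cast_pred (by omega)]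
    rw [hy, hcast, one_div, Real.rpow_inv_natCast_pow (by positivity) (by omega)]
  have hMy : M * k ≤ y :=
    (pow_le_pow_iff_left₀ (by positivity) hy0 (by omega : l - 1 ≠ 0)).1 (hMk.trans_eq hypow.symm)
  obtain ⟨s, hMs, hys, hsy⟩ := exists_nat_mul_mem_Ico hk hM hMy
  have hs1 : (1 : ℝ) ≤ (k * s : ℕ) := by exact_mod_cast Nat.mul_pos hk (hM.trans hMs)
  have hfloor : (⌊D * ((k * s : ℕ) * K)⌋₊ : ℝ) ≤ (k * s : ℕ) * (D * K) :=
    (Nat.floor_le (by positivity)).trans_eq (by ring)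
  refine ⟨s, ⌊D * ((k * s : ℕ) * K)⌋₊, hMs,
    nine_mul_le_floor_mul hD (one_le_mul_of_one_le_of_one_le hs1 hK), ?_, ?_⟩
  · calc A * ⌊D * ((k * s : ℕ) * K)⌋₊ ≤ A * ((k * s : ℕ) * (D * K)) := by gcongr
      _ = y ^ (l - 1) * (k * s : ℕ) := by rw [hypow]; ring
      _ ≤ ((k * s : ℕ) : ℝ) ^ (l - 1) * (k * s : ℕ) := by gcongr
      _ = ((k * s : ℕ) : ℝ) ^ l := by rw [← pow_succ, Nat.sub_add_cancel (by omega)]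
  · calc (⌊D * ((k * s : ℕ) * K)⌋₊ : ℝ) ≤ (k * s : ℕ) * (D * K) := hfloor
      _ < 2 * y * (D * K) := by gcongr
      _ = _ := by rw [mul_assoc, hy, rpow_one_div_mul_self hA hDK hl']

theorem one_le_descFactorial_sq_div_factorial {r l : ℕ} (hlr : l ≤ r) :
    1 ≤ (r.descFactorial l : ℝ) ^ 2 / l.factorial := by
  rw [one_le_div (by positivity)]
  have hpos : 0 < r.descFactorial l := Nat.descFactorial_pos.2 hlr
  exact_mod_cast (Nat.le_of_dvd hpos (Nat.factorial_dvd_descFactorial r l)).trans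
    (Nat.le_self_pow two_ne_zero _)

theorem exists_parameters {r l k : ℕ} (hl : 2 ≤ l) (hlr : l ≤ r)
    (hk : ((r ^ 2 : ℕ) : ℝ) ^ (l - 1) ≤ Real.log k) :
    ∃ s m : ℕ, 1 ≤ Real.log k ∧ r ^ 2 ≤ s ∧ 9 * (s * Real.log k) * (k : ℝ) ^ r ≤ m ∧
      100 * (r.descFactorial l : ℝ) ^ 2 / l.factorial * m ≤ ((k * s : ℕ) : ℝ) ^ l ∧
      (m : ℝ) <
        (2 * (100 * (r.descFactorial l : ℝ) ^ 2 / (l.factorial : ℝ)) ^ (1 / ((l : ℝ) - 1)) *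
          (10 * ((r : ℝ) - 1) / ((l : ℝ) - 1)) ^ ((l : ℝ) / ((l : ℝ) - 1))) *
        ((k : ℝ) ^ (r - 1) * Real.log k) ^ ((l : ℝ) / ((l : ℝ) - 1)) := by
  have hr1 : 1 ≤ r ^ 2 := Nat.one_le_pow _ _ (by omega)
  have hlog : 1 ≤ Real.log k := (one_le_pow₀ (by exact_mod_cast hr1)).trans hk
  have hk0 : 0 < k := Nat.pos_of_ne_zero (by rintro rfl; norm_num at hlog)
  have hk1 : (1 : ℝ) ≤ k := by exact_mod_cast hk0
  have hl' : 0 < (l : ℝ) - 1 := sub_pos.2 (by exact_mod_cast hl)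
  have hA : 1 ≤ 100 * (r.descFactorial l : ℝ) ^ 2 / l.factorial := by
    rw [mul_div_assoc]
    linarith [one_le_descFactorial_sq_div_factorial hlr]
  have hD : 10 ≤ 10 * ((r : ℝ) - 1) / ((l : ℝ) - 1) := by
    rw [le_div_iff₀ hl']
    gcongr
  have hK : 1 ≤ (k : ℝ) ^ (r - 1) * Real.log k :=
    one_le_mul_of_one_le_of_one_le (one_le_pow₀ hk1) hlog
  set A : ℝ := 100 * (r.descFactorial l : ℝ) ^ 2 / l.factorial
  set D : ℝ := 10 * ((r : ℝ) - 1) / ((l : ℝ) - 1)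
  have hsize : ((r ^ 2 : ℕ) * k : ℝ) ^ (l - 1) ≤ A * (D * ((k : ℝ) ^ (r - 1) * Real.log k)) :=
    calc ((r ^ 2 : ℕ) * k : ℝ) ^ (l - 1) = (k : ℝ) ^ (l - 1) * ((r ^ 2 : ℕ) : ℝ) ^ (l - 1) := by
          rw [mul_pow, mul_comm]
      _ ≤ (k : ℝ) ^ (r - 1) * Real.log k := by gcongr
      _ ≤ A * D * ((k : ℝ) ^ (r - 1) * Real.log k) :=
          le_mul_of_one_le_left (by positivity)
            (one_le_mul_of_one_le_of_one_le hA (by linarith))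
      _ = _ := mul_assoc _ _ _
  obtain ⟨s, m, hs, hm, hm', hlt⟩ :=
    exists_vertex_edge_counts hl hk0 hr1 (by linarith) hD hK hsize
  refine ⟨s, m, hlog, hs, le_trans (le_of_eq ?_) hm, hm', hlt.trans_eq ?_⟩
  · rw [← mul_pow_sub_one (by omega : r ≠ 0)]
    push_cast
    ring
  · rw [Real.mul_rpow (by positivity) (by positivity)]
    ring

/-- **Theorem.** Fix `2 ≤ l < r`. For all sufficiently large `k` there exists an
`(r,l)`-system with chromatic number greater than `k` and fewer than
`c_{r,l} (k^(r-1) log k)^(l/(l-1))` edges, where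
`c_{r,l} = 2 (100 (r)_l² / l!)^(1/(l-1)) (10(r-1)/(l-1))^(l/(l-1))`
and `(r)_l` is the falling factorial. -/
theorem rl_system_upper_bound (r l : ℕ) (hl : 2 ≤ l) (hlr : l < r) :
    ∃ k₀ : ℕ, ∀ k : ℕ, k₀ ≤ k →
      ∃ (n : ℕ) (E : Finset (Finset (Fin n))),
        IsRLSystem r l E ∧ ¬ HypColorable E k ∧
        (E.card : ℝ) <
          (2 * (100 * (r.descFactorial l : ℝ) ^ 2 / (l.factorial : ℝ)) ^ (1 / ((l : ℝ) - 1)) *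
            (10 * ((r : ℝ) - 1) / ((l : ℝ) - 1)) ^ ((l : ℝ) / ((l : ℝ) - 1))) *
          ((k : ℝ) ^ (r - 1) * Real.log k) ^ ((l : ℝ) / ((l : ℝ) - 1)) := by
  obtain ⟨k₀, hk₀⟩ := Filter.eventually_atTop.1
    ((Real.tendsto_log_atTop.comp tendsto_natCast_atTop_atTop).eventually_ge_atTop
      (((r ^ 2 : ℕ) : ℝ) ^ (l - 1)))
  refine ⟨k₀, fun k hk => ?_⟩
  obtain ⟨s, m, hlog, hs, hm, hm', hlt⟩ := exists_parameters hl hlr.le (hk₀ k hk)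
  obtain ⟨E, hE, hcol, hcard⟩ :=
    exists_isRLSystem_not_hypColorable (hl.trans hlr.le) hlr.le hlog hs hm hm'
  exact ⟨k * s, E, hE, hcol, (Nat.cast_le.2 hcard).trans_lt hlt⟩
end

section
/- Fix r ≥ 3. For all sufficiently large n there exists an r-graph G on n vertices such that: G contains no copy of K_{r+1}^r, G has fewer than n^r/(r−1)^{r−1} edges, and the chromatic number of G is at least n/(4r log n) (in particular, every set of more than 4r log n vertices of G contains an edge). -/
/-- The `r`-graph `E` contains a copy of the complete `r`-graph `K_t^r`:
some `t` vertices have all their `r`-element subsets as edges. -/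
def HasCompleteR (r t : ℕ) {V : Type*} (E : Finset (Finset V)) : Prop :=
  ∃ S : Finset V, S.card = t ∧ ∀ e ⊆ S, e.card = r → e ∈ E

/-!
Colour the ordered pairs of a linearly ordered vertex set with `r - 1` colours, and call an `r`-set
an edge if its least vertex `v` sees every colour exactly once on its other vertices.

In a copy of `K_{r+1}^r` with least vertex `v`, two of the other `r` vertices get the same colour
from `v`, so an `r`-subset through `v` and those two is not an edge. By AM-GM at most
`(n / (r - 1)) ^ (r - 1)` edges have a given least vertex. Finally, if `S` is independent, then each
`v ∈ S` misses a colour on the later vertices of `S`; for a uniformly random colouring these events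
are independent over `v`, and together they have probability at most
`((r - 1) * exp (-(#S - 1) / (2 * (r - 1)))) ^ #S`. This beats the number of sets of size `#S` as
soon as `#S` exceeds `4 * r * log n`. Probabilities are densities in the finite space of colourings.
-/

section Preliminaries

open Finset

lemma prod_le_sum_div_card_pow {ι : Type*} (s : Finset ι) {z : ι → ℝ} (hz : ∀ i ∈ s, 0 ≤ z i) :
    ∏ i ∈ s, z i ≤ ((∑ i ∈ s, z i) / #s) ^ #s := by
  obtain rfl | hs := s.eq_empty_or_nonempty
  · simp
  have hprod : 0 ≤ ∏ i ∈ s, z i := prod_nonneg hz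
  have hgeom : (∏ i ∈ s, z i) ^ (#s : ℝ)⁻¹ ≤ (∑ i ∈ s, z i) / #s := by
    simpa using Real.geom_mean_le_arith_mean s (fun _ => 1) z (fun _ _ => zero_le_one)
      (by simpa using hs) hz
  calc ∏ i ∈ s, z i = ((∏ i ∈ s, z i) ^ (#s : ℝ)⁻¹) ^ #s :=
        (Real.rpow_inv_natCast_pow hprod hs.card_pos.ne').symm
    _ ≤ ((∑ i ∈ s, z i) / #s) ^ #s := by gcongr

lemma sum_card_filter_lt {α : Type*} [LinearOrder α] (s : Finset α) :
    ∑ a ∈ s, #{b ∈ s | a < b} = (#s).choose 2 := by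
  induction s using Finset.induction_on_min with
  | empty => simp
  | insert a s ha ih =>
    have has : a ∉ s := fun h => (ha a h).false
    have hmin : {b ∈ insert a s | a < b} = s := by
      rw [filter_insert, if_neg (lt_irrefl a), filter_true_of_mem ha]
    have hrest : ∀ x ∈ s, #{b ∈ insert a s | x < b} = #{b ∈ s | x < b} := fun x hx => by
      rw [filter_insert, if_neg (ha x hx).not_gt]
    rw [sum_insert has, hmin, sum_congr rfl hrest, ih, card_insert_of_notMem has,
      Nat.choose_succ_succ' _ 1, Nat.choose_one_right]

lemma dens_piFinset {ι : Type*} [Fintype ι] [DecidableEq ι] {α : ι → Type*}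
    [∀ i, Fintype (α i)] (s : ∀ i, Finset (α i)) :
    (Fintype.piFinset s).dens = ∏ i, (s i).dens := by
  simp [dens, Fintype.card_pi, prod_div_distrib]

lemma dens_filter_forall_mem {ι : Type*} [Fintype ι] [DecidableEq ι] {α : ι → Type*}
    [∀ i, Fintype (α i)] [∀ i, Nonempty (α i)] (s : Finset ι) (p : ∀ i, α i → Prop)
    [∀ i, DecidablePred (p i)] :
    ({g | ∀ i ∈ s, p i (g i)} : Finset (∀ i, α i)).dens =
      ∏ i ∈ s, ({a | p i a} : Finset (α i)).dens := by
  have hpi : ({g | ∀ i ∈ s, p i (g i)} : Finset (∀ i, α i)) =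
      Fintype.piFinset fun i => if i ∈ s then univ.filter (p i) else univ := by
    ext g
    simp only [mem_filter_univ, Fintype.mem_piFinset]
    refine forall_congr' fun i => ?_
    split_ifs with hi <;> simp [hi]
  simp [hpi, dens_piFinset, apply_ite dens, prod_ite_mem]

lemma dens_filter_forall_ne_le {α β : Type*} [Fintype α] [DecidableEq α] [Fintype β]
    [DecidableEq β] (s : Finset α) (b : β) :
    (({g | ∀ a ∈ s, g a ≠ b} : Finset (α → β)).dens : ℝ) ≤
      Real.exp (-(#s / Fintype.card β)) := by
  have : Nonempty β := ⟨b⟩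
  have hne : (({b' | b' ≠ b} : Finset β).dens : ℝ) = 1 - (Fintype.card β : ℝ)⁻¹ := by
    have hβ : (Fintype.card β : ℝ) ≠ 0 := by positivity
    rw [nnratCast_dens, filter_ne', card_erase_of_mem (mem_univ b), card_univ,
      Nat.cast_pred Fintype.card_pos, sub_div, div_self hβ, one_div]
  calc (({g | ∀ a ∈ s, g a ≠ b} : Finset (α → β)).dens : ℝ)
      = (({b' | b' ≠ b} : Finset β).dens : ℝ) ^ #s := by
        rw [dens_filter_forall_mem s fun _ b' => b' ≠ b, prod_const, NNRat.cast_pow]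
    _ ≤ Real.exp (-(Fintype.card β : ℝ)⁻¹) ^ #s := by
        gcongr
        exact hne.trans_le (Real.one_sub_le_exp_neg _)
    _ = Real.exp (-(#s / Fintype.card β)) := by
        rw [← Real.exp_nat_mul, mul_neg, div_eq_mul_inv]

lemma dens_filter_exists_forall_ne_le {α β : Type*} [Fintype α] [DecidableEq α] [Fintype β]
    [DecidableEq β] (s : Finset α) :
    (({g | ∃ b, ∀ a ∈ s, g a ≠ b} : Finset (α → β)).dens : ℝ) ≤
      Fintype.card β * Real.exp (-(#s / Fintype.card β)) := by
  have hunion : ({g | ∃ b, ∀ a ∈ s, g a ≠ b} : Finset (α → β)) =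
      univ.biUnion fun b => {g | ∀ a ∈ s, g a ≠ b} := by
    ext g
    simp
  calc (({g | ∃ b, ∀ a ∈ s, g a ≠ b} : Finset (α → β)).dens : ℝ)
      ≤ ∑ b, (({g | ∀ a ∈ s, g a ≠ b} : Finset (α → β)).dens : ℝ) := by
        rw [hunion]
        exact_mod_cast dens_biUnion_le
    _ ≤ ∑ _b : β, Real.exp (-(#s / Fintype.card β)) :=
        sum_le_sum fun b _ => dens_filter_forall_ne_le s b
    _ = Fintype.card β * Real.exp (-(#s / Fintype.card β)) := by
        rw [sum_const, card_univ, nsmul_eq_mul]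

end Preliminaries

section Independent

variable {V : Type*} {E : Finset (Finset V)}

/-- A set of vertices is independent in the hypergraph with edge set `E` if it contains no edge. -/
def IsIndependent (E : Finset (Finset V)) (S : Finset V) : Prop :=
  ∀ e ∈ E, ¬ e ⊆ S

lemma IsIndependent.mono {S T : Finset V} (hT : IsIndependent E T) (hST : S ⊆ T) :
    IsIndependent E S :=
  fun e he heS => hT e he (heS.trans hST)

lemma IsProperColoring.isIndependent_fiber [Fintype V] {k : ℕ} {f : V → Fin k}
    (hf : IsProperColoring E f) (hE : ∀ e ∈ E, 2 ≤ e.card) (i : Fin k) :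
    IsIndependent E {v | f v = i} := by
  intro e he hei
  obtain ⟨u, hu, v, hv, huv⟩ := hf e he (hE e he)
  exact huv (((Finset.mem_filter_univ u).1 (hei hu)).trans
    ((Finset.mem_filter_univ v).1 (hei hv)).symm)

lemma HypColorable.card_le_mul [Fintype V] {k : ℕ} {a : ℝ} (hk : HypColorable E k)
    (hE : ∀ e ∈ E, 2 ≤ e.card) (ha : ∀ S : Finset V, IsIndependent E S → (S.card : ℝ) ≤ a) :
    (Fintype.card V : ℝ) ≤ k * a := by
  obtain ⟨f, hf⟩ := hk
  calc (Fintype.card V : ℝ) = ∑ i : Fin k, ((Finset.univ.filter (f · = i)).card : ℝ) := by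
        rw [← Finset.card_univ, Finset.card_eq_sum_card_fiberwise (f := f) (t := Finset.univ)
          (by simp), Nat.cast_sum]
    _ ≤ ∑ _i : Fin k, a := Finset.sum_le_sum fun i _ => ha _ (hf.isIndependent_fiber hE i)
    _ = k * a := by simp

end Independent

section RainbowStars

open Finset

variable {V C : Type*} [Fintype V] [LinearOrder V] [DecidableEq C] {c : V → V → C}

/-- The later neighbours of `v` in colour `i`, when `c v u` is read as the colour of the pair
`v < u`. The values `c v u` with `u ≤ v` are ignored; keeping them makes the rows `c v`
of a uniformly random `c` independent and identically distributed. -/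
def laterNeighbors (c : V → V → C) (v : V) (i : C) : Finset V :=
  {u | v < u ∧ c v u = i}

lemma mem_laterNeighbors {u v : V} {i : C} : u ∈ laterNeighbors c v i ↔ v < u ∧ c v u = i := by
  simp [laterNeighbors]

variable [Fintype C]

/-- The hypergraph whose edges are the sets `{v} ∪ {g i | i : C}` in which `g i` is a later
neighbour of `v` in colour `i`: the least vertex `v` sees each colour exactly once. It is the
hypergraph that proves the theorem, for a suitable colouring by `r - 1` colours. -/
def rainbowStars (c : V → V → C) : Finset (Finset V) :=
  univ.biUnion fun v =>
    (Fintype.piFinset (laterNeighbors c v)).image fun g => insert v (univ.image g)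

lemma mem_rainbowStars {e : Finset V} :
    e ∈ rainbowStars c ↔ ∃ v, ∃ g : C → V, (∀ i, v < g i ∧ c v (g i) = i) ∧
      insert v (univ.image g) = e := by
  simp [rainbowStars, mem_laterNeighbors]

lemma sum_card_laterNeighbors (c : V → V → C) (v : V) :
    ∑ i, #(laterNeighbors c v i) = #{u | v < u} := by
  rw [card_eq_sum_card_fiberwise (f := c v) (t := univ) (by simp)]
  simp [laterNeighbors, filter_filter]

lemma isRGraph_rainbowStars (c : V → V → C) :
    IsRGraph (Fintype.card C + 1) (rainbowStars c) := by
  intro e he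
  obtain ⟨v, g, hg, rfl⟩ := mem_rainbowStars.1 he
  have hinj : Function.Injective g := Function.LeftInverse.injective fun i => (hg i).2
  have hv : v ∉ univ.image g := by
    simpa using fun i => (hg i).1.ne'
  rw [card_insert_of_notMem hv, card_image_of_injective _ hinj, card_univ]

lemma injOn_erase_of_mem_rainbowStars {e : Finset V} (he : e ∈ rainbowStars c) {v : V}
    (hv : v ∈ e) (hmin : ∀ u ∈ e, v ≤ u) : Set.InjOn (c v) (e.erase v) := by
  obtain ⟨w, g, hg, rfl⟩ := mem_rainbowStars.1 he
  obtain rfl : v = w := by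
    refine (hmin w (mem_insert_self _ _)).antisymm ?_
    obtain rfl | ⟨i, -, rfl⟩ := by simpa only [mem_insert, mem_image] using hv
    exacts [le_rfl, (hg i).1.le]
  have himage : ∀ x ∈ (insert v (univ.image g)).erase v, g (c v x) = x := by
    intro x hx
    obtain ⟨hxv, hxe⟩ := mem_erase.1 hx
    obtain ⟨i, -, rfl⟩ := mem_image.1 (mem_of_mem_insert_of_ne hxe hxv)
    rw [(hg i).2]
  exact Set.LeftInvOn.injOn himage

lemma not_hasCompleteR_rainbowStars (hC : 2 ≤ Fintype.card C) (c : V → V → C) :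
    ¬ HasCompleteR (Fintype.card C + 1) (Fintype.card C + 2) (rainbowStars c) := by
  rintro ⟨S, hS, hcomplete⟩
  have hne : S.Nonempty := card_pos.1 (by omega)
  obtain ⟨v, hvS, hmin⟩ : ∃ v ∈ S, ∀ u ∈ S, v ≤ u := ⟨S.min' hne, S.min'_mem hne, S.min'_le⟩
  obtain ⟨x, hx, y, hy, hxy, hcolor⟩ :=
    exists_ne_map_eq_of_card_lt_of_maps_to (s := S.erase v) (t := univ) (f := c v)
      (by rw [card_erase_of_mem hvS, hS, card_univ]; omega) (by simp)
  have hsub : {v, x, y} ⊆ S := by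
    simp [insert_subset_iff, hvS, mem_of_mem_erase hx, mem_of_mem_erase hy]
  obtain ⟨e, hle, heS, hcard⟩ := exists_subsuperset_card_eq (n := Fintype.card C + 1) hsub
    (card_le_three.trans (by omega)) (by omega)
  have hinj := injOn_erase_of_mem_rainbowStars (hcomplete e heS hcard) (hle (by simp))
    fun u hu => hmin u (heS hu)
  exact hxy (hinj (mem_erase.2 ⟨ne_of_mem_erase hx, hle (by simp)⟩)
    (mem_erase.2 ⟨ne_of_mem_erase hy, hle (by simp)⟩) hcolor)

lemma card_rainbowStars_le_sum_prod (c : V → V → C) :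
    #(rainbowStars c) ≤ ∑ v, ∏ i, #(laterNeighbors c v i) :=
  card_biUnion_le.trans <| sum_le_sum fun _ _ =>
    card_image_le.trans (Fintype.card_piFinset _).le

lemma prod_card_laterNeighbors_lt [Nonempty C] (c : V → V → C) (v : V) :
    ∏ i, (#(laterNeighbors c v i) : ℝ) <
      (Fintype.card V / Fintype.card C : ℝ) ^ Fintype.card C := by
  have hlater : #{u | v < u} < Fintype.card V := card_lt_univ_of_notMem (x := v) (by simp)
  calc ∏ i, (#(laterNeighbors c v i) : ℝ)
      ≤ ((∑ i, (#(laterNeighbors c v i) : ℝ)) / Fintype.card C) ^ Fintype.card C :=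
        prod_le_sum_div_card_pow univ fun _ _ => by positivity
    _ = (#{u | v < u} / Fintype.card C : ℝ) ^ Fintype.card C := by
        rw [← Nat.cast_sum, sum_card_laterNeighbors]
    _ < (Fintype.card V / Fintype.card C : ℝ) ^ Fintype.card C := by
        gcongr

lemma card_rainbowStars_lt [Nonempty V] [Nonempty C] (c : V → V → C) :
    (#(rainbowStars c) : ℝ) <
      (Fintype.card V : ℝ) ^ (Fintype.card C + 1) / (Fintype.card C : ℝ) ^ Fintype.card C :=
  calc (#(rainbowStars c) : ℝ) ≤ ∑ v, ∏ i, (#(laterNeighbors c v i) : ℝ) := by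
        exact_mod_cast card_rainbowStars_le_sum_prod c
    _ < ∑ _v : V, (Fintype.card V / Fintype.card C : ℝ) ^ Fintype.card C :=
        sum_lt_sum_of_nonempty univ_nonempty fun v _ => prod_card_laterNeighbors_lt c v
    _ = _ := by
        rw [sum_const, card_univ, nsmul_eq_mul, div_pow, pow_succ', mul_div_assoc]

lemma IsIndependent.exists_forall_color_ne {S : Finset V}
    (hS : IsIndependent (rainbowStars c) S) {v : V} (hv : v ∈ S) :
    ∃ i, ∀ u ∈ S.filter (v < ·), c v u ≠ i := by
  by_contra! h
  choose g hg hc using h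
  simp only [mem_filter] at hg
  refine hS _ (mem_rainbowStars.2 ⟨v, g, fun i => ⟨(hg i).2, hc i⟩, rfl⟩) ?_
  simpa only [insert_subset_iff, hv, image_subset_iff, true_and] using fun i _ => (hg i).1

open scoped Classical in
lemma dens_isIndependent_rainbowStars_le [Nonempty C] (S : Finset V) :
    (({c | IsIndependent (rainbowStars c) S} : Finset (V → V → C)).dens : ℝ) ≤
      (Fintype.card C : ℝ) ^ #S * Real.exp (-((#S).choose 2 / Fintype.card C)) := by
  have hsub : ({c | IsIndependent (rainbowStars c) S} : Finset (V → V → C)) ⊆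
      ({c | ∀ v ∈ S, ∃ i, ∀ u ∈ S.filter (v < ·), c v u ≠ i} : Finset (V → V → C)) :=
    monotone_filter_right _ fun _ _ hc _ => hc.exists_forall_color_ne
  calc (({c | IsIndependent (rainbowStars c) S} : Finset (V → V → C)).dens : ℝ)
      ≤ (({c | ∀ v ∈ S, ∃ i, ∀ u ∈ S.filter (v < ·), c v u ≠ i} :
          Finset (V → V → C)).dens : ℝ) := by
        exact_mod_cast dens_le_dens hsub
    _ = ∏ v ∈ S, (({g | ∃ i, ∀ u ∈ S.filter (v < ·), g u ≠ i} :
          Finset (V → C)).dens : ℝ) := by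
        rw [dens_filter_forall_mem S fun v (g : V → C) => ∃ i, ∀ u ∈ S.filter (v < ·), g u ≠ i,
          NNRat.cast_prod]
    _ ≤ ∏ v ∈ S, (Fintype.card C * Real.exp (-(#(S.filter (v < ·)) / Fintype.card C))) :=
        prod_le_prod (fun _ _ => by positivity) fun v _ => dens_filter_exists_forall_ne_le _
    _ = (Fintype.card C : ℝ) ^ #S * Real.exp (-((#S).choose 2 / Fintype.card C)) := by
        rw [prod_mul_distrib, prod_const, ← Real.exp_sum, sum_neg_distrib, ← sum_div,
          ← Nat.cast_sum, sum_card_filter_lt]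

lemma choose_mul_pow_mul_exp_lt_one {n s : ℕ} {q : ℝ} (hq : 0 ≤ q)
    (h : n * q * Real.exp (-(s / (2 * q))) < 1) :
    (n.choose (s + 1) : ℝ) * (q ^ (s + 1) * Real.exp (-((s + 1).choose 2 / q))) < 1 := by
  have hexp : Real.exp (-((s + 1).choose 2 / q)) = Real.exp (-(s / (2 * q))) ^ (s + 1) := by
    rw [← Real.exp_nat_mul, Nat.cast_choose_two]
    congr 1
    push_cast
    ring
  calc (n.choose (s + 1) : ℝ) * (q ^ (s + 1) * Real.exp (-((s + 1).choose 2 / q)))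
      ≤ (n : ℝ) ^ (s + 1) * (q ^ (s + 1) * Real.exp (-((s + 1).choose 2 / q))) := by
        gcongr
        exact_mod_cast Nat.choose_le_pow _ _
    _ = (n * q * Real.exp (-(s / (2 * q)))) ^ (s + 1) := by
        rw [hexp, mul_pow, mul_pow, mul_assoc]
    _ < 1 := pow_lt_one₀ (by positivity) h s.succ_ne_zero

lemma exists_rainbowStars_forall_isIndependent_card_le [Nonempty C] {s : ℕ}
    (h : (Fintype.card V : ℝ) * Fintype.card C * Real.exp (-(s / (2 * Fintype.card C))) < 1) :
    ∃ c : V → V → C, ∀ S, IsIndependent (rainbowStars c) S → #S ≤ s := by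
  classical
  let bad : Finset (V → V → C) :=
    (univ.powersetCard (s + 1)).biUnion fun S => {c | IsIndependent (rainbowStars c) S}
  have hbad : (bad.dens : ℝ) < 1 :=
    calc (bad.dens : ℝ) ≤ ∑ S ∈ univ.powersetCard (s + 1),
          (({c | IsIndependent (rainbowStars c) S} : Finset (V → V → C)).dens : ℝ) := by
          exact_mod_cast dens_biUnion_le
      _ ≤ ∑ _S ∈ (univ : Finset V).powersetCard (s + 1), (Fintype.card C : ℝ) ^ (s + 1) *
          Real.exp (-((s + 1).choose 2 / Fintype.card C)) := by
          refine sum_le_sum fun S hS => ?_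
          rw [← (mem_powersetCard.1 hS).2]
          exact dens_isIndependent_rainbowStars_le S
      _ = ((Fintype.card V).choose (s + 1) : ℝ) * ((Fintype.card C : ℝ) ^ (s + 1) *
          Real.exp (-((s + 1).choose 2 / Fintype.card C))) := by
          rw [sum_const, card_powersetCard, card_univ, nsmul_eq_mul]
      _ < 1 := choose_mul_pow_mul_exp_lt_one (Nat.cast_nonneg _) h
  obtain ⟨c, hc⟩ : ∃ c, c ∉ bad := by
    by_contra! hall
    rw [eq_univ_iff_forall.2 hall, dens_univ] at hbad
    simp at hbad
  refine ⟨c, fun S hS => ?_⟩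
  by_contra! hcard
  obtain ⟨T, hTS, hT⟩ := exists_subset_card_eq hcard
  exact hc (mem_biUnion.2 ⟨T, by simpa using hT, by simpa using hS.mono hTS⟩)

end RainbowStars

lemma mul_mul_exp_neg_floor_lt_one {n q : ℝ} (hn : 2 ≤ n) (hq : 0 < q) (hqn : q ≤ n) :
    n * q * Real.exp (-(⌊4 * (q + 1) * Real.log n⌋₊ / (2 * q))) < 1 := by
  have hlog : 1 / 2 < Real.log n := by
    linarith [Real.log_two_gt_d9, Real.log_le_log two_pos hn]
  have hfloor : 2 * Real.log n < ⌊4 * (q + 1) * Real.log n⌋₊ / (2 * q) := by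
    rw [lt_div_iff₀ (by positivity)]
    linarith [Nat.lt_floor_add_one (4 * (q + 1) * Real.log n)]
  calc n * q * Real.exp (-(⌊4 * (q + 1) * Real.log n⌋₊ / (2 * q)))
      ≤ n * n * Real.exp (-(⌊4 * (q + 1) * Real.log n⌋₊ / (2 * q))) := by gcongr
    _ < n * n * Real.exp (-(2 * Real.log n)) := by gcongr
    _ = 1 := by
        rw [two_mul, neg_add, Real.exp_add, Real.exp_neg, Real.exp_log (by positivity)]
        field_simp

theorem clique_free_construction_general {V : Type*} [Fintype V] {r : ℕ} (hr : 3 ≤ r)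
    (hV : r ≤ Fintype.card V) :
    ∃ E : Finset (Finset V),
      IsRGraph r E ∧ ¬ HasCompleteR r (r + 1) E ∧
      (E.card : ℝ) < (Fintype.card V : ℝ) ^ r / ((r : ℝ) - 1) ^ (r - 1) ∧
      (∀ k : ℕ, HypColorable E k →
        (Fintype.card V : ℝ) / (4 * (r : ℝ) * Real.log (Fintype.card V)) ≤ (k : ℝ)) ∧
      (∀ S : Finset V, 4 * (r : ℝ) * Real.log (Fintype.card V) < (S.card : ℝ) →
        ∃ e ∈ E, e ⊆ S) := by
  obtain ⟨q, rfl⟩ : ∃ q, r = q + 1 := ⟨r - 1, by omega⟩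
  let : LinearOrder V := LinearOrder.lift' (Fintype.equivFin V) (Fintype.equivFin V).injective
  have : Nonempty V := Fintype.card_pos_iff.1 (by omega)
  have : Nonempty (Fin q) := ⟨⟨0, by omega⟩⟩
  have hn : (2 : ℝ) ≤ Fintype.card V := by exact_mod_cast (by omega : 2 ≤ Fintype.card V)
  have hqn : (q : ℝ) ≤ Fintype.card V := by exact_mod_cast (by omega : q ≤ Fintype.card V)
  set a : ℝ := 4 * ((q + 1 : ℕ) : ℝ) * Real.log (Fintype.card V) with ha
  have ha0 : 0 < a := mul_pos (by positivity) (Real.log_pos (one_lt_two.trans_le hn))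
  obtain ⟨c, hc⟩ := exists_rainbowStars_forall_isIndependent_card_le (V := V) (C := Fin q)
    (s := ⌊a⌋₊) (by
      simpa [ha] using mul_mul_exp_neg_floor_lt_one hn (Nat.cast_pos.2 (by omega)) hqn)
  have hindep : ∀ S, IsIndependent (rainbowStars c) S → (S.card : ℝ) ≤ a :=
    fun S hS => (Nat.le_floor_iff ha0.le).1 (hc S hS)
  have hunif : IsRGraph (q + 1) (rainbowStars c) := by simpa using isRGraph_rainbowStars c
  refine ⟨rainbowStars c, hunif, ?_, ?_, fun k hk => ?_, fun S hS => ?_⟩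
  · simpa using not_hasCompleteR_rainbowStars (by rw [Fintype.card_fin]; omega) c
  · simpa using card_rainbowStars_lt c
  · exact (div_le_iff₀ ha0).2 (hk.card_le_mul (fun e he => by rw [hunif e he]; omega) hindep)
  · by_contra! h
    exact (hindep S h).not_gt hS

/-- **Theorem.** Fix `r ≥ 3`. For all sufficiently large `n` there is an `r`-graph on `n`
vertices containing no copy of `K_{r+1}^r`, with fewer than `n^r/(r-1)^(r-1)` edges, whose
chromatic number is at least `n/(4r log n)`; in particular every set of more than
`4r log n` vertices contains an edge. -/
theorem clique_free_construction (r : ℕ) (hr : 3 ≤ r) :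
    ∃ n₀ : ℕ, ∀ n : ℕ, n₀ ≤ n →
      ∃ E : Finset (Finset (Fin n)),
        IsRGraph r E ∧ ¬ HasCompleteR r (r + 1) E ∧
        (E.card : ℝ) < (n : ℝ) ^ r / ((r : ℝ) - 1) ^ (r - 1) ∧
        (∀ k : ℕ, HypColorable E k → (n : ℝ) / (4 * (r : ℝ) * Real.log n) ≤ (k : ℝ)) ∧
        (∀ S : Finset (Fin n), 4 * (r : ℝ) * Real.log n < (S.card : ℝ) →
          ∃ e ∈ E, e ⊆ S) := by
  refine ⟨r, fun n hn => ?_⟩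
  simpa using clique_free_construction_general (V := Fin n) hr (by simpa using hn)
end
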